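/- arXiv:2306.12494 — 6 statements merged into one kernel-verified Lean document; each statement's English description precedes it below -/
import Mathlib

section
/- Let K ⊆ ℝ² be a compact convex set with nonempty interior whose boundary ∂K is a C² curve of strictly positive curvature, and fix the origin 0 in the interior of K. Then the generating function S is continuously differentiable on the domain {(φ₀, φ₁) ∈ ℝ² : φ₀ < φ₁ < φ₀ + π}, and its partial derivatives satisfy ∂S/∂φ₀(φ₀,φ₁) = −|M₀|²/2 and ∂S/∂φ₁(φ₀,φ₁) = |M₁|²/2, where M₀ = M₀(φ₀,φ₁) and M₁ = M₁(φ₀,φ₁) are the endpoints of the unique segment tangent to ∂K at its midpoint with M_i on the open ray from 0 of polar angle φ_i. -/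
/-!
The proof is an envelope argument. Write `a`, `b` for the coordinates of a point `Q` along the two
rays, scaled by `sin (φ₁ - φ₀)`. Every line through a point `Q` of the open sector cuts off a
triangle of area at least `2ab / sin (φ₁ - φ₀) =: sectorArea Q φ`, by AM-GM, with equality exactly
when `Q` bisects the cut. A segment tangent to `∂K` at its midpoint `P` supports `K`
(`isTangentMid_of_segData`), so every `Q ∈ K` in the sector lies below it, whence
`sectorArea Q φ ≤ sectorArea P φ = S φ`, with equality only for `Q = P`. Thus `S` is the maximum of
`sectorArea Q` over points `Q` of `K` in the sector, attained at the unique point `P`.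

Uniqueness of the maximiser and compactness of `K` make `P` continuous in `φ`
(`continuousAt_tangentMid`), and the envelope theorem (`hasFDerivAt_of_envelope`) then shows that `S` is
differentiable with derivative that of `sectorArea P` for `P` frozen, which is continuous in `φ`.
The two partial derivatives of `sectorArea P` are explicit.
-/

open Real MeasureTheory Set

noncomputable section

/-- Determinant of two plane vectors. -/
def detV (u v : ℝ × ℝ) : ℝ := u.1 * v.2 - u.2 * v.1

/-- The unit vector of polar angle `φ`. -/
def uVec (φ : ℝ) : ℝ × ℝ := (Real.cos φ, Real.sin φ)

/-- The boundary of `K` is a `C²` curve of strictly positive curvature, expressed through the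
radial function `r` of `∂K` with respect to the interior point `O`. -/
def HasC2PosCurvBoundary (K : Set (ℝ × ℝ)) (O : ℝ × ℝ) (r : ℝ → ℝ) : Prop :=
  O ∈ interior K ∧ ContDiff ℝ 2 r ∧ (∀ φ, r (φ + 2 * π) = r φ) ∧ (∀ φ, 0 < r φ) ∧
  (∀ φ, 0 < r φ ^ 2 + 2 * (deriv r φ) ^ 2 - r φ * deriv (deriv r) φ) ∧
  frontier K = {p | ∃ φ, p = O + r φ • uVec φ}

/-- `T` is the outer billiard map of `K`: for `A ∉ K`, the midpoint of `[A, T A]` lies on `∂K`,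
the segment `[A, T A]` meets `K` exactly at this midpoint, and `K` lies to the left of the
oriented segment. -/
def IsOuterBilliard (K : Set (ℝ × ℝ)) (T : ℝ × ℝ → ℝ × ℝ) : Prop :=
  ∀ A, A ∉ K →
    T A ∉ K ∧
    (1 / 2 : ℝ) • (A + T A) ∈ frontier K ∧
    segment ℝ A (T A) ∩ K = {(1 / 2 : ℝ) • (A + T A)} ∧
    ∀ k ∈ K, 0 ≤ detV (T A - A) (k - (1 / 2 : ℝ) • (A + T A))

/-- A set is an ellipse if it is the image of the unit circle under an invertible affine map. -/
def IsEllipse (C : Set (ℝ × ℝ)) : Prop :=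
  ∃ (L : (ℝ × ℝ) →ₗ[ℝ] ℝ × ℝ) (c : ℝ × ℝ), Function.Bijective L ∧
    C = (fun x => c + L x) '' {x : ℝ × ℝ | x.1 ^ 2 + x.2 ^ 2 = 1}

/-- The polar dual of `C` with respect to `x`. -/
def polarDual (C : Set (ℝ × ℝ)) (x : ℝ × ℝ) : Set (ℝ × ℝ) :=
  {y | ∀ c ∈ C, y.1 * (c.1 - x.1) + y.2 * (c.2 - x.2) ≤ 1}

/-- `x` is the Santalo point of `C`: the interior point minimizing the area of the polar dual. -/
def IsSantaloPoint (C : Set (ℝ × ℝ)) (x : ℝ × ℝ) : Prop :=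
  x ∈ interior C ∧ ∀ y ∈ interior C, volume (polarDual C x) ≤ volume (polarDual C y)

/-- The data of a segment `[M₀, M₁]` with `Mᵢ` on the open ray of polar angle `φᵢ`,
tangent to `∂K` exactly at its midpoint. -/
def SegData (K : Set (ℝ × ℝ)) (φ₀ φ₁ : ℝ) (M₀ M₁ : ℝ × ℝ) : Prop :=
  (∃ s > (0 : ℝ), M₀ = s • uVec φ₀) ∧ (∃ s > (0 : ℝ), M₁ = s • uVec φ₁) ∧
  (1 / 2 : ℝ) • (M₀ + M₁) ∈ frontier K ∧
  segment ℝ M₀ M₁ ∩ K = {(1 / 2 : ℝ) • (M₀ + M₁)}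

/-- `S` is the generating function of the outer billiard of `K` (with respect to the origin `0`):
`S φ₀ φ₁` is the area of the triangle `0 M₀ M₁`. -/
def IsGenFun (K : Set (ℝ × ℝ)) (S : ℝ → ℝ → ℝ) : Prop :=
  ∀ φ₀ φ₁ : ℝ, φ₀ < φ₁ → φ₁ < φ₀ + π →
    ∃ M₀ M₁, SegData K φ₀ φ₁ M₀ M₁ ∧ S φ₀ φ₁ = |detV M₀ M₁| / 2

/-- The angular configuration `φ : ℤ → ℝ` is locally minimizing for the generating function `S`. -/
def LocMinConfig (S : ℝ → ℝ → ℝ) (φ : ℤ → ℝ) : Prop :=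
  ∀ M N : ℤ, M ≤ N →
    IsLocalMin (fun x : ℤ → ℝ =>
      S (φ (M - 1)) (x M) + (∑ i ∈ Finset.Icc M (N - 1), S (x i) (x (i + 1))) +
        S (x N) (φ (N + 1))) φ

/-- `φ` is a choice of polar angles for the sequence `A`, with consecutive angles within `(0, π)`
of each other. -/
def IsPolarLift (A : ℤ → ℝ × ℝ) (φ : ℤ → ℝ) : Prop :=
  (∀ n, ∃ ρ > (0 : ℝ), A n = ρ • uVec (φ n)) ∧ ∀ n, φ n < φ (n + 1) ∧ φ (n + 1) < φ n + π

/-- Every orbit of the outer billiard map `T` is locally minimizing with respect to the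
generating function `S`. -/
def AllOrbitsLocMin (K : Set (ℝ × ℝ)) (T : ℝ × ℝ → ℝ × ℝ) (S : ℝ → ℝ → ℝ) : Prop :=
  ∀ A : ℤ → ℝ × ℝ, (∀ n, A n ∉ K) → (∀ n, A (n + 1) = T (A n)) →
    ∀ φ : ℤ → ℝ, IsPolarLift A φ → LocMinConfig S φ

open Filter Topology

/-! ### Tangent segments as solutions of an area maximisation -/

/-- The area of the triangle cut off from the sector `φ.1 < arg < φ.2` by the line whose
intersection with the sector is bisected by `Q`, for `Q` in the open sector. -/
def sectorArea (Q φ : ℝ × ℝ) : ℝ :=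
  2 * (detV Q (uVec φ.2) * detV (uVec φ.1) Q) / Real.sin (φ.2 - φ.1)

/-- `P` is the midpoint of a segment which joins the rays of polar angles `φ.1`, `φ.2` and
supports `K`. The last field says that `K` lies on the same side as `0` of the line through
`P` that meets the two rays at points having `P` as midpoint. -/
structure IsTangentMid (K : Set (ℝ × ℝ)) (φ P : ℝ × ℝ) : Prop where
  mem : P ∈ K
  pos₁ : 0 < detV P (uVec φ.2)
  pos₀ : 0 < detV (uVec φ.1) P
  support : ∀ Q ∈ K, detV (uVec φ.1) P * detV Q (uVec φ.2) +
    detV P (uVec φ.2) * detV (uVec φ.1) Q ≤ 2 * (detV P (uVec φ.2) * detV (uVec φ.1) P)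

lemma detV_uVec (x y : ℝ) : detV (uVec x) (uVec y) = Real.sin (y - x) := by
  simp only [detV, uVec, Real.sin_sub]; ring

/-- If `K` had a point beyond the line `M₀M₁`, scaling it towards the interior point `0` would put
an interior point `R` of `K` on that line. Points of `[M₀, M₁]` slightly off the midpoint towards
`R` would then be interior to `K`, although the midpoint is the only common point. -/
lemma isTangentMid_of_segData {K : Set (ℝ × ℝ)} (hconv : Convex ℝ K) (hcomp : IsCompact K)
    (h0 : (0 : ℝ × ℝ) ∈ interior K) {φ M₀ M₁ : ℝ × ℝ} (hφ : 0 < Real.sin (φ.2 - φ.1))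
    (h : SegData K φ.1 φ.2 M₀ M₁) : IsTangentMid K φ ((1 / 2 : ℝ) • (M₀ + M₁)) := by
  obtain ⟨⟨s, hs, rfl⟩, ⟨t, ht, rfl⟩, hfr, hseg⟩ := h
  have hD := detV_uVec φ.1 φ.2
  set D := Real.sin (φ.2 - φ.1) with hDdef
  set u := uVec φ.1
  set v := uVec φ.2
  have ha : detV ((1 / 2 : ℝ) • (s • u + t • v)) v = s * D / 2 := by
    rw [← hD]; simp [detV]; ring
  have hb : detV u ((1 / 2 : ℝ) • (s • u + t • v)) = t * D / 2 := by
    rw [← hD]; simp [detV]; ring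
  have hmem : (1 / 2 : ℝ) • (s • u + t • v) ∈ K := hcomp.isClosed.frontier_subset hfr
  refine ⟨hmem, by rw [ha]; positivity, by rw [hb]; positivity, fun Q hQ => ?_⟩
  rw [ha, hb]
  by_contra! hlt
  set a := detV Q v
  set b := detV u Q
  have hsum : s * t * D < t * a + s * b := by
    have : D * (s * t * D) < D * (t * a + s * b) := by linarith
    exact lt_of_mul_lt_mul_left this hφ.le
  have hpos : 0 < s * t * D := by positivity
  set m := (1 / 2 : ℝ) • (s • u + t • v) with hm
  -- `c⁻¹ • Q` lies on the line through the two endpoints.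
  set c := (t * a + s * b) / (s * t * D) with hc
  have hc1 : 1 < c := by rw [hc, one_lt_div hpos]; exact hsum
  have hc0 : 0 < c := by linarith
  have hR : c⁻¹ • Q ∈ interior K := by
    have := hconv.combo_interior_self_mem_interior h0 hQ
      (a := 1 - c⁻¹) (b := c⁻¹) (by linarith [inv_lt_one_of_one_lt₀ hc1])
      (by positivity) (by ring)
    simpa using this
  set x := a / (s * D * c) with hx
  have hy : b / (t * D * c) = 1 - x := by
    have : t * a + s * b = c * (s * t * D) := by rw [hc]; field_simp
    rw [hx]; field_simp; linarith
  have hQ1 : D • Q = a • u + b • v := by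
    rw [← hD]; ext <;> simp [a, b, detV] <;> ring
  have hRx : c⁻¹ • Q = x • (s • u) + (1 - x) • (t • v) := by
    have : c⁻¹ • Q = (c⁻¹ * D⁻¹) • (D • Q) := by
      rw [smul_smul]; congr 1; field_simp
    rw [this, hQ1, ← hy, hx, smul_add, smul_smul, smul_smul, smul_smul, smul_smul]
    congr 2 <;> field_simp
  -- `ε` is small enough that moving from `m` towards `c⁻¹ • Q` by the factor `ε` stays in `[M₀, M₁]`.
  set ε := (1 + 2 * |x - 1 / 2|)⁻¹ with hε
  have hden : 0 < 1 + 2 * |x - 1 / 2| := by positivity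
  have hε0 : 0 < ε := by positivity
  have hε1 : ε ≤ 1 := inv_le_one_of_one_le₀ (by linarith [abs_nonneg (x - 1 / 2)])
  have hεx : |ε * (x - 1 / 2)| ≤ 1 / 2 := by
    rw [abs_mul, abs_of_pos hε0, hε, inv_mul_le_iff₀ hden]; linarith
  obtain ⟨hl, hr⟩ := abs_le.1 hεx
  have hN : ε • (c⁻¹ • Q) + (1 - ε) • m ∈ interior K :=
    hconv.combo_interior_self_mem_interior hR hmem hε0 (by linarith) (by ring)
  have hNseg : ε • (c⁻¹ • Q) + (1 - ε) • m ∈ segment ℝ (s • u) (t • v) := by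
    refine ⟨1 / 2 + ε * (x - 1 / 2), 1 / 2 - ε * (x - 1 / 2), by linarith, by linarith,
      by ring, ?_⟩
    rw [hRx, hm]; module
  have hNm : ε • (c⁻¹ • Q) + (1 - ε) • m = m := by
    have : ε • (c⁻¹ • Q) + (1 - ε) • m ∈ ({m} : Set (ℝ × ℝ)) :=
      hseg ▸ ⟨hNseg, interior_subset hN⟩
    simpa using this
  rw [hNm] at hN
  exact hfr.2 hN

lemma IsTangentMid.le {K : Set (ℝ × ℝ)} {φ P Q : ℝ × ℝ} (hP : IsTangentMid K φ P)
    (hφ : 0 < Real.sin (φ.2 - φ.1)) (hQ : Q ∈ K) (ha : 0 ≤ detV Q (uVec φ.2))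
    (hb : 0 ≤ detV (uVec φ.1) Q) : sectorArea Q φ ≤ sectorArea P φ := by
  have h := hP.support Q hQ
  have h1 := hP.pos₁
  have h0 := hP.pos₀
  unfold sectorArea
  generalize detV Q (uVec φ.2) = a at *
  generalize detV (uVec φ.1) Q = b at *
  generalize detV P (uVec φ.2) = A at *
  generalize detV (uVec φ.1) P = B at *
  gcongr 2 * ?_ / _
  have hz : 0 < A * B := mul_pos h1 h0
  have hX : 0 ≤ B * a := by positivity
  have hY : 0 ≤ A * b := by positivity
  have : (A * B) * (a * b) ≤ (A * B) * (A * B) := by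
    nlinarith [sq_nonneg (B * a - A * b)]
  exact le_of_mul_le_mul_left this hz

/-- The equality case of AM-GM: the tangency midpoint is the only maximiser of `sectorArea`. -/
lemma IsTangentMid.eq_of_le {K : Set (ℝ × ℝ)} {φ P Q : ℝ × ℝ} (hP : IsTangentMid K φ P)
    (hφ : 0 < Real.sin (φ.2 - φ.1)) (hQ : Q ∈ K) (ha : 0 ≤ detV Q (uVec φ.2))
    (hb : 0 ≤ detV (uVec φ.1) Q) (hle : sectorArea P φ ≤ sectorArea Q φ) : Q = P := by
  have h := hP.support Q hQ
  have h1 := hP.pos₁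
  have h0 := hP.pos₀
  unfold sectorArea at hle
  rw [div_le_div_iff_of_pos_right hφ] at hle
  have key : detV Q (uVec φ.2) = detV P (uVec φ.2) ∧ detV (uVec φ.1) Q = detV (uVec φ.1) P := by
    generalize detV Q (uVec φ.2) = a at *
    generalize detV (uVec φ.1) Q = b at *
    generalize detV P (uVec φ.2) = A at *
    generalize detV (uVec φ.1) P = B at *
    have hz : 0 < A * B := mul_pos h1 h0
    have hX : 0 ≤ B * a := by positivity
    have hY : 0 ≤ A * b := by positivity
    -- `B * a` and `A * b` have sum at most `2 * A * B` and product at least `(A * B) ^ 2`.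
    have hprod : (A * B) * (A * B) ≤ (B * a) * (A * b) := by nlinarith
    have hXY : B * a = A * b := by
      have : (B * a - A * b) ^ 2 ≤ 0 := by nlinarith
      nlinarith [pow_eq_zero_iff (two_ne_zero) |>.1 (le_antisymm this (sq_nonneg _))]
    have hXZ : B * a = A * B := by nlinarith
    constructor
    · nlinarith
    · have : A * b = A * B := by linarith
      exact mul_left_cancel₀ h1.ne' this
  obtain ⟨k1, k2⟩ := key
  have hD := detV_uVec φ.1 φ.2
  -- A vector is determined by its two determinants against the directions of the rays.
  have hQ1 : ∀ R : ℝ × ℝ, Real.sin (φ.2 - φ.1) • R =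
      detV R (uVec φ.2) • uVec φ.1 + detV (uVec φ.1) R • uVec φ.2 := by
    intro R
    rw [← hD]; ext <;> simp [detV] <;> ring
  have := hQ1 Q
  rw [k1, k2, ← hQ1 P] at this
  exact smul_right_injective _ hφ.ne' this

/-! ### The envelope theorem and continuity of the midpoint -/

lemma contDiffAt_sectorArea {z : (ℝ × ℝ) × (ℝ × ℝ)} (hz : Real.sin (z.2.2 - z.2.1) ≠ 0) :
    ContDiffAt ℝ 2 (fun z : (ℝ × ℝ) × (ℝ × ℝ) => sectorArea z.1 z.2) z := by
  unfold sectorArea detV uVec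
  exact ContDiffAt.div (by fun_prop) (by fun_prop) hz

/-- The envelope theorem. The increment of `S` lies between the increments of `F (P x₀)` and
`F (P x)`, and strict differentiability of `F` makes both of them the increment of the
linear map up to `o(x - x₀)`. -/
lemma hasFDerivAt_of_envelope {E X : Type*} [NormedAddCommGroup E] [NormedSpace ℝ E]
    [NormedAddCommGroup X] [NormedSpace ℝ X] {F : E × X → ℝ} {S : X → ℝ} {P : X → E} {x₀ : X}
    {L : E × X →L[ℝ] ℝ} (hF : HasStrictFDerivAt F L (P x₀, x₀)) (hP : ContinuousAt P x₀)
    (hS : ∀ᶠ x in 𝓝 x₀, S x = F (P x, x)) (hlo : ∀ᶠ x in 𝓝 x₀, F (P x₀, x) ≤ F (P x, x))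
    (hup : ∀ᶠ x in 𝓝 x₀, F (P x, x₀) ≤ F (P x₀, x₀)) :
    HasFDerivAt S (L.comp (ContinuousLinearMap.inr ℝ E X)) x₀ := by
  rw [hasFDerivAt_iff_isLittleO, Asymptotics.isLittleO_iff]
  intro c hc
  have hF' := Asymptotics.isLittleO_iff.1 hF.isLittleO hc
  have t1 : Tendsto (fun x => ((P x₀, x), (P x₀, x₀))) (𝓝 x₀)
      (𝓝 ((P x₀, x₀), (P x₀, x₀))) := by
    apply Continuous.tendsto' (by fun_prop) _ _ rfl
  have t2 : Tendsto (fun x => ((P x, x), (P x, x₀))) (𝓝 x₀)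
      (𝓝 ((P x₀, x₀), (P x₀, x₀))) :=
    (hP.tendsto.prodMk_nhds tendsto_id).prodMk_nhds (hP.tendsto.prodMk_nhds tendsto_const_nhds)
  filter_upwards [hS, hlo, hup, t1.eventually hF', t2.eventually hF'] with x h1 h2 h3 h4 h5
  rw [h1, hS.self_of_nhds]
  simp only [Prod.mk_sub_mk, sub_self, Prod.norm_mk, norm_zero, Real.norm_eq_abs] at h4 h5
  rw [max_eq_right (norm_nonneg _), abs_le] at h4 h5
  simp only [ContinuousLinearMap.comp_apply, ContinuousLinearMap.inr_apply, Real.norm_eq_abs]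
  rw [abs_le]
  constructor <;> linarith [h4.1, h5.2]

lemma tendsto_detV_snd {P : ℝ × ℝ → ℝ × ℝ} {l : Filter (ℝ × ℝ)} {Q φ : ℝ × ℝ}
    (h : Tendsto (fun ψ => (P ψ, ψ)) l (𝓝 (Q, φ))) :
    Tendsto (fun ψ => detV (P ψ) (uVec ψ.2)) l (𝓝 (detV Q (uVec φ.2))) := by
  have hc : Continuous fun z : (ℝ × ℝ) × (ℝ × ℝ) => detV z.1 (uVec z.2.2) := by
    unfold detV uVec; fun_prop
  have h2 := Tendsto.comp (hc.continuousAt (x := (Q, φ))) h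
  simpa only [Function.comp_def] using h2

lemma tendsto_detV_fst {P : ℝ × ℝ → ℝ × ℝ} {l : Filter (ℝ × ℝ)} {Q φ : ℝ × ℝ}
    (h : Tendsto (fun ψ => (P ψ, ψ)) l (𝓝 (Q, φ))) :
    Tendsto (fun ψ => detV (uVec ψ.1) (P ψ)) l (𝓝 (detV (uVec φ.1) Q)) := by
  have hc : Continuous fun z : (ℝ × ℝ) × (ℝ × ℝ) => detV (uVec z.2.1) z.1 := by
    unfold detV uVec; fun_prop
  have h2 := Tendsto.comp (hc.continuousAt (x := (Q, φ))) h
  simpa only [Function.comp_def] using h2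

/-- A fixed point in the open sector stays in it under small changes of the angles, hence remains a
competitor in the maximum. -/
lemma eventually_sectorArea_le {K : Set (ℝ × ℝ)} {P : ℝ × ℝ → ℝ × ℝ} {φ : ℝ × ℝ}
    (hP : ∀ᶠ ψ in 𝓝 φ, 0 < Real.sin (ψ.2 - ψ.1) ∧ IsTangentMid K ψ (P ψ)) :
    ∀ᶠ ψ in 𝓝 φ, sectorArea (P φ) ψ ≤ sectorArea (P ψ) ψ := by
  obtain ⟨-, h0⟩ := hP.self_of_nhds
  have c1 : Continuous fun ψ : ℝ × ℝ => detV (P φ) (uVec ψ.2) := by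
    unfold detV uVec; fun_prop
  have c2 : Continuous fun ψ : ℝ × ℝ => detV (uVec ψ.1) (P φ) := by
    unfold detV uVec; fun_prop
  have e1 : ∀ᶠ ψ in 𝓝 φ, 0 < detV (P φ) (uVec ψ.2) :=
    (isOpen_lt continuous_const c1).mem_nhds h0.pos₁
  have e2 : ∀ᶠ ψ in 𝓝 φ, 0 < detV (uVec ψ.1) (P φ) :=
    (isOpen_lt continuous_const c2).mem_nhds h0.pos₀
  filter_upwards [hP, e1, e2] with ψ h1 h2 h3
  exact h1.2.le h1.1 h0.mem h2.le h3.le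

/-- The tangency midpoint depends continuously on the angles: by compactness of `K` it suffices that
every cluster point is a maximiser of `sectorArea`, and the maximiser is unique. -/
lemma continuousAt_tangentMid {K : Set (ℝ × ℝ)} (hcomp : IsCompact K) {P : ℝ × ℝ → ℝ × ℝ}
    {φ : ℝ × ℝ} (hP : ∀ᶠ ψ in 𝓝 φ, 0 < Real.sin (ψ.2 - ψ.1) ∧ IsTangentMid K ψ (P ψ)) :
    ContinuousAt P φ := by
  obtain ⟨hφ, h0⟩ := hP.self_of_nhds
  refine hcomp.tendsto_nhds_of_unique_mapClusterPt (hP.mono fun ψ h => h.2.mem) ?_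
  intro Q hQ hcl
  obtain ⟨U, hU, hUQ⟩ := mapClusterPt_iff_ultrafilter.1 hcl
  have hpair : Tendsto (fun ψ => (P ψ, ψ)) U (𝓝 (Q, φ)) := hUQ.prodMk_nhds hU
  have hpair0 : Tendsto (fun ψ => (P φ, ψ)) U (𝓝 (P φ, φ)) := tendsto_const_nhds.prodMk_nhds hU
  have hPU : ∀ᶠ ψ in (U : Filter (ℝ × ℝ)), IsTangentMid K ψ (P ψ) :=
    Filter.Eventually.filter_mono hU (hP.mono fun ψ h => h.2)
  have l1 : Tendsto (fun ψ => detV (P ψ) (uVec ψ.2)) U (𝓝 (detV Q (uVec φ.2))) :=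
    tendsto_detV_snd hpair
  have l2 : Tendsto (fun ψ => detV (uVec ψ.1) (P ψ)) U (𝓝 (detV (uVec φ.1) Q)) :=
    tendsto_detV_fst hpair
  have hc : ∀ R : ℝ × ℝ, Tendsto
      (fun z : (ℝ × ℝ) × (ℝ × ℝ) => sectorArea z.1 z.2) (𝓝 (R, φ)) (𝓝 (sectorArea R φ)) :=
    fun R => (contDiffAt_sectorArea (z := (R, φ)) hφ.ne').continuousAt
  have l3 : Tendsto (fun ψ => sectorArea (P φ) ψ) U (𝓝 (sectorArea (P φ) φ)) := by
    simpa only [Function.comp_def] using Tendsto.comp (hc (P φ)) hpair0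
  have l4 : Tendsto (fun ψ => sectorArea (P ψ) ψ) U (𝓝 (sectorArea Q φ)) := by
    simpa only [Function.comp_def] using Tendsto.comp (hc Q) hpair
  exact h0.eq_of_le hφ hQ (ge_of_tendsto l1 (hPU.mono fun ψ h => h.pos₁.le))
    (ge_of_tendsto l2 (hPU.mono fun ψ h => h.pos₀.le))
    (le_of_tendsto_of_tendsto l3 l4 (Filter.Eventually.filter_mono hU (eventually_sectorArea_le hP)))

lemma hasFDerivAt_genFun {K : Set (ℝ × ℝ)} (hcomp : IsCompact K) {P : ℝ × ℝ → ℝ × ℝ} {φ : ℝ × ℝ}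
    (hP : ∀ᶠ ψ in 𝓝 φ, 0 < Real.sin (ψ.2 - ψ.1) ∧ IsTangentMid K ψ (P ψ)) {S : ℝ × ℝ → ℝ}
    (hS : ∀ᶠ ψ in 𝓝 φ, S ψ = sectorArea (P ψ) ψ) :
    HasFDerivAt S ((fderiv ℝ (fun z : (ℝ × ℝ) × (ℝ × ℝ) => sectorArea z.1 z.2) (P φ, φ)).comp
      (ContinuousLinearMap.inr ℝ (ℝ × ℝ) (ℝ × ℝ))) φ := by
  obtain ⟨hφ, h0⟩ := hP.self_of_nhds
  have hcont := continuousAt_tangentMid hcomp hP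
  have c1 : Continuous fun Q : ℝ × ℝ => detV Q (uVec φ.2) := by unfold detV; fun_prop
  have c2 : Continuous fun Q : ℝ × ℝ => detV (uVec φ.1) Q := by unfold detV; fun_prop
  have e1 : ∀ᶠ ψ in 𝓝 φ, 0 < detV (P ψ) (uVec φ.2) :=
    hcont.eventually ((isOpen_lt continuous_const c1).mem_nhds h0.pos₁)
  have e2 : ∀ᶠ ψ in 𝓝 φ, 0 < detV (uVec φ.1) (P ψ) :=
    hcont.eventually ((isOpen_lt continuous_const c2).mem_nhds h0.pos₀)
  refine hasFDerivAt_of_envelope (P := P)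
    ((contDiffAt_sectorArea (z := (P φ, φ)) hφ.ne').hasStrictFDerivAt (by norm_num)) hcont hS
    (eventually_sectorArea_le hP) ?_
  filter_upwards [hP, e1, e2] with ψ h1 h2 h3
  exact h0.le hφ h1.2.mem h2.le h3.le

/-! ### Value and partial derivatives at the midpoint -/

lemma sectorArea_mid (s t : ℝ) {φ : ℝ × ℝ} (hφ : Real.sin (φ.2 - φ.1) ≠ 0) :
    sectorArea ((1 / 2 : ℝ) • (s • uVec φ.1 + t • uVec φ.2)) φ =
      s * t * Real.sin (φ.2 - φ.1) / 2 := by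
  have ha : detV ((1 / 2 : ℝ) • (s • uVec φ.1 + t • uVec φ.2)) (uVec φ.2)
      = s * Real.sin (φ.2 - φ.1) / 2 := by
    rw [← detV_uVec]; simp [detV]; ring
  have hb : detV (uVec φ.1) ((1 / 2 : ℝ) • (s • uVec φ.1 + t • uVec φ.2))
      = t * Real.sin (φ.2 - φ.1) / 2 := by
    rw [← detV_uVec]; simp [detV]; ring
  unfold sectorArea
  rw [ha, hb]; field_simp

lemma hasDerivAt_sectorArea_fst (s t φ₀ φ₁ : ℝ) (hφ : Real.sin (φ₁ - φ₀) ≠ 0) :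
    HasDerivAt (fun a => sectorArea ((1 / 2 : ℝ) • (s • uVec φ₀ + t • uVec φ₁)) (a, φ₁))
      (-s ^ 2 / 2) φ₀ := by
  have hf : (fun a => sectorArea ((1 / 2 : ℝ) • (s • uVec φ₀ + t • uVec φ₁)) (a, φ₁)) =
      fun a => (s * Real.sin (φ₁ - φ₀) / 2) * (s * Real.sin (φ₀ - a) + t * Real.sin (φ₁ - a)) /
        Real.sin (φ₁ - a) := by
    funext a
    unfold sectorArea
    congr 1
    simp only [← detV_uVec, detV, Prod.smul_fst, Prod.smul_snd, Prod.fst_add, Prod.snd_add,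
      smul_eq_mul]
    ring
  rw [hf]
  have hs : ∀ c : ℝ, HasDerivAt (fun a => Real.sin (c - a)) (Real.cos (c - φ₀) * (-1)) φ₀ :=
    fun c => ((hasDerivAt_id φ₀).const_sub c).sin
  refine (((((hs φ₀).const_mul s).add ((hs φ₁).const_mul t)).const_mul
    (s * Real.sin (φ₁ - φ₀) / 2)).div (hs φ₁) hφ).congr_deriv ?_
  simp only [Pi.add_apply, sub_self, Real.sin_zero, Real.cos_zero]
  field_simp
  ring

lemma hasDerivAt_sectorArea_snd (s t φ₀ φ₁ : ℝ) (hφ : Real.sin (φ₁ - φ₀) ≠ 0) :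
    HasDerivAt (fun b => sectorArea ((1 / 2 : ℝ) • (s • uVec φ₀ + t • uVec φ₁)) (φ₀, b))
      (t ^ 2 / 2) φ₁ := by
  have hf : (fun b => sectorArea ((1 / 2 : ℝ) • (s • uVec φ₀ + t • uVec φ₁)) (φ₀, b)) =
      fun b => (t * Real.sin (φ₁ - φ₀) / 2) * (s * Real.sin (b - φ₀) + t * Real.sin (b - φ₁)) /
        Real.sin (b - φ₀) := by
    funext b
    unfold sectorArea
    congr 1
    simp only [← detV_uVec, detV, Prod.smul_fst, Prod.smul_snd, Prod.fst_add, Prod.snd_add,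
      smul_eq_mul]
    ring
  rw [hf]
  have hs : ∀ c : ℝ, HasDerivAt (fun b => Real.sin (b - c)) (Real.cos (φ₁ - c) * 1) φ₁ :=
    fun c => ((hasDerivAt_id φ₁).sub_const c).sin
  refine (((((hs φ₀).const_mul s).add ((hs φ₁).const_mul t)).const_mul
    (t * Real.sin (φ₁ - φ₀) / 2)).div (hs φ₀) hφ).congr_deriv ?_
  simp only [Pi.add_apply, sub_self, Real.sin_zero, Real.cos_zero]
  field_simp
  ring

/-- The generating function `S` is `C¹` on `{φ₀ < φ₁ < φ₀ + π}` and its partial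
derivatives are `S₁ = −|M₀|²/2`, `S₂ = |M₁|²/2`. -/
theorem generating_function_derivatives
    (K : Set (ℝ × ℝ)) (hconv : Convex ℝ K) (hcomp : IsCompact K)
    (hint : (interior K).Nonempty)
    (r : ℝ → ℝ) (hbd : HasC2PosCurvBoundary K 0 r)
    (S : ℝ → ℝ → ℝ) (hS : IsGenFun K S) :
    ContDiffOn ℝ 1 (fun p : ℝ × ℝ => S p.1 p.2) {p : ℝ × ℝ | p.1 < p.2 ∧ p.2 < p.1 + π} ∧
    ∀ φ₀ φ₁ : ℝ, φ₀ < φ₁ → φ₁ < φ₀ + π → ∀ M₀ M₁ : ℝ × ℝ, SegData K φ₀ φ₁ M₀ M₁ →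
      deriv (fun a => S a φ₁) φ₀ = -(M₀.1 ^ 2 + M₀.2 ^ 2) / 2 ∧
      deriv (fun b => S φ₀ b) φ₁ = (M₁.1 ^ 2 + M₁.2 ^ 2) / 2 := by
  have hdom : ∀ φ : ℝ × ℝ, φ ∈ {p : ℝ × ℝ | p.1 < p.2 ∧ p.2 < p.1 + π} →
      0 < Real.sin (φ.2 - φ.1) := fun φ h =>
    Real.sin_pos_of_pos_of_lt_pi (by linarith [h.1]) (by linarith [h.2])
  have hopen : IsOpen {p : ℝ × ℝ | p.1 < p.2 ∧ p.2 < p.1 + π} :=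
    (isOpen_lt continuous_fst continuous_snd).inter
      (isOpen_lt continuous_snd (continuous_fst.add continuous_const))
  have hex : ∀ φ : ℝ × ℝ, ∃ P : ℝ × ℝ, φ ∈ {p : ℝ × ℝ | p.1 < p.2 ∧ p.2 < p.1 + π} →
      IsTangentMid K φ P ∧ S φ.1 φ.2 = sectorArea P φ := by
    intro φ
    by_cases hφ : φ ∈ {p : ℝ × ℝ | p.1 < p.2 ∧ p.2 < p.1 + π}
    · obtain ⟨M₀, M₁, hM, hSM⟩ := hS φ.1 φ.2 hφ.1 hφ.2
      refine ⟨_, fun _ => ⟨isTangentMid_of_segData hconv hcomp hbd.1 (hdom φ hφ) hM, ?_⟩⟩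
      obtain ⟨⟨s, hs, rfl⟩, ⟨t, ht, rfl⟩, -⟩ := hM
      have hdet : detV (s • uVec φ.1) (t • uVec φ.2) = s * t * Real.sin (φ.2 - φ.1) := by
        rw [← detV_uVec]; simp [detV]; ring
      have := hdom φ hφ
      rw [hSM, hdet, sectorArea_mid s t this.ne', abs_of_pos (by positivity)]
    · exact ⟨0, fun h => absurd h hφ⟩
  choose P hP using hex
  have hev : ∀ φ ∈ {p : ℝ × ℝ | p.1 < p.2 ∧ p.2 < p.1 + π},
      ∀ᶠ ψ in 𝓝 φ, 0 < Real.sin (ψ.2 - ψ.1) ∧ IsTangentMid K ψ (P ψ) := fun φ hφ => by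
    filter_upwards [hopen.mem_nhds hφ] with ψ hψ using ⟨hdom ψ hψ, (hP ψ hψ).1⟩
  have hder := fun φ (hφ : φ ∈ {p : ℝ × ℝ | p.1 < p.2 ∧ p.2 < p.1 + π}) =>
    hasFDerivAt_genFun hcomp (hev φ hφ) (S := fun p : ℝ × ℝ => S p.1 p.2)
      (by filter_upwards [hopen.mem_nhds hφ] with ψ hψ using (hP ψ hψ).2)
  refine ⟨?_, ?_⟩
  · rw [show (1 : WithTop ℕ∞) = 0 + 1 from (zero_add 1).symm,
      contDiffOn_succ_iff_fderiv_of_isOpen hopen]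
    refine ⟨fun φ hφ => (hder φ hφ).differentiableAt.differentiableWithinAt, by simp, ?_⟩
    rw [contDiffOn_zero]
    refine ContinuousOn.congr (f := fun φ =>
      (fderiv ℝ (fun z : (ℝ × ℝ) × (ℝ × ℝ) => sectorArea z.1 z.2) (P φ, φ)).comp
        (ContinuousLinearMap.inr ℝ (ℝ × ℝ) (ℝ × ℝ))) ?_ fun φ hφ => (hder φ hφ).fderiv
    intro φ hφ
    refine ContinuousAt.continuousWithinAt ?_
    have h1 : ContinuousAt (fun ψ => (P ψ, ψ)) φ :=
      (continuousAt_tangentMid hcomp (hev φ hφ)).prodMk continuousAt_id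
    have h2 : ContinuousAt (fderiv ℝ (fun z : (ℝ × ℝ) × (ℝ × ℝ) => sectorArea z.1 z.2)) (P φ, φ) :=
      ((contDiffAt_sectorArea (z := (P φ, φ)) (hdom φ hφ).ne').fderiv_right
        (m := 1) (by norm_num)).continuousAt
    exact (ContinuousAt.comp (f := fun ψ => (P ψ, ψ)) h2 h1).clm_comp continuousAt_const
  · intro φ₀ φ₁ h01 h10 M₀ M₁ hM
    have hφ : (φ₀, φ₁) ∈ {p : ℝ × ℝ | p.1 < p.2 ∧ p.2 < p.1 + π} := ⟨h01, h10⟩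
    have hsin := hdom _ hφ
    have hT := isTangentMid_of_segData (φ := (φ₀, φ₁)) hconv hcomp hbd.1 hsin hM
    have hPM : P (φ₀, φ₁) = (1 / 2 : ℝ) • (M₀ + M₁) := by
      have h := (hP _ hφ).1
      -- Both midpoints maximise `sectorArea`, so they agree.
      exact (h.eq_of_le hsin hT.mem hT.pos₁.le hT.pos₀.le
        (hT.le hsin h.mem h.pos₁.le h.pos₀.le)).symm
    have hd := hder _ hφ
    have hFd : HasFDerivAt (fun ψ : ℝ × ℝ => sectorArea (P (φ₀, φ₁)) ψ)
        ((fderiv ℝ (fun z : (ℝ × ℝ) × (ℝ × ℝ) => sectorArea z.1 z.2) (P (φ₀, φ₁), (φ₀, φ₁))).comp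
        (ContinuousLinearMap.inr ℝ (ℝ × ℝ) (ℝ × ℝ))) (φ₀, φ₁) :=
      ((contDiffAt_sectorArea (z := (P (φ₀, φ₁), (φ₀, φ₁))) hsin.ne').differentiableAt
        (by norm_num)).hasFDerivAt.comp (φ₀, φ₁) (hasFDerivAt_prodMk_right _ _)
    obtain ⟨⟨s, hs, rfl⟩, ⟨t, ht, rfl⟩, -⟩ := hM
    have hnorm : ∀ s φ : ℝ, (s • uVec φ).1 ^ 2 + (s • uVec φ).2 ^ 2 = s ^ 2 := by
      intro s φ
      simp only [uVec, Prod.smul_fst, Prod.smul_snd, smul_eq_mul]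
      linear_combination s ^ 2 * Real.sin_sq_add_cos_sq φ
    rw [hnorm, hnorm]
    have e0 : HasDerivAt (fun a : ℝ => (a, φ₁)) ((1, 0) : ℝ × ℝ) φ₀ :=
      (hasDerivAt_id φ₀).prodMk (hasDerivAt_const φ₀ φ₁)
    have e1 : HasDerivAt (fun b : ℝ => (φ₀, b)) ((0, 1) : ℝ × ℝ) φ₁ :=
      (hasDerivAt_const φ₁ φ₀).prodMk (hasDerivAt_id φ₁)
    constructor
    · have k1 := hd.comp_hasDerivAt φ₀ e0
      have k2 := hFd.comp_hasDerivAt φ₀ e0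
      rw [hPM] at k1 k2
      exact k1.deriv.trans (k2.unique (hasDerivAt_sectorArea_fst s t φ₀ φ₁ hsin.ne'))
    · have k1 := hd.comp_hasDerivAt φ₁ e1
      have k2 := hFd.comp_hasDerivAt φ₁ e1
      rw [hPM] at k1 k2
      exact k1.deriv.trans (k2.unique (hasDerivAt_sectorArea_snd s t φ₀ φ₁ hsin.ne'))
end
end

section
/- Let r : ℝ → ℝ be a C², 2π-periodic function with r > 0 and χ := r² + 2r′² − r r″ > 0 everywhere, and let (φ, t) satisfy t > 0, r(φ) − t r′(φ) > 0 and r(φ) + t r′(φ) > 0. Suppose S is a C¹ real-valued function on an open neighborhood of Ψ(φ,t) in ℝ² such that S(Ψ(φ′, t′)) = t′ r(φ′)² for all (φ′, t′) in a neighborhood of (φ, t). Then ∂S/∂φ₀ at Ψ(φ,t) equals −r₀²(φ,t)/2 and ∂S/∂φ₁ at Ψ(φ,t) equals r₁²(φ,t)/2. -/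
/-!
Write `α`, `β` for the partial derivatives of `S` at `Ψ(φ,t)`, and put `a = α / r₀²`, `b = β / r₁²`.
Differentiating `S ∘ Ψ = t r²` with respect to `t` and `φ`, where
`∂ₜφ₀ = -r²/r₀²`, `∂ₜφ₁ = r²/r₁²`, `∂_φ φ₀ = (r² - 2t r r' + t²χ)/r₀²` and
`∂_φ φ₁ = (r² + 2t r r' + t²χ)/r₁²`, gives the linear system
`b - a = 1`, `a (r² - 2t r r' + t²χ) + b (r² + 2t r r' + t²χ) = 2t r r'`.
Its determinant is a nonzero multiple of `r² + t²χ > 0`, so `a = -1/2`, `b = 1/2` is the only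
solution.
-/


open Real

noncomputable section

/-- `r₀²(φ,t) = (r(φ) − t r′(φ))² + t² r(φ)²`. -/
def r0sq (r : ℝ → ℝ) (φ t : ℝ) : ℝ := (r φ - t * deriv r φ) ^ 2 + t ^ 2 * r φ ^ 2

/-- `r₁²(φ,t) = (r(φ) + t r′(φ))² + t² r(φ)²`. -/
def r1sq (r : ℝ → ℝ) (φ t : ℝ) : ℝ := (r φ + t * deriv r φ) ^ 2 + t ^ 2 * r φ ^ 2

/-- `χ(φ) = r² + 2r′² − r r″`, the numerator of the curvature in polar coordinates. -/
def chiF (r : ℝ → ℝ) (φ : ℝ) : ℝ :=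
  r φ ^ 2 + 2 * (deriv r φ) ^ 2 - r φ * deriv (deriv r) φ

/-- The change of variables `Ψ(φ,t) = (φ₀, φ₁)`. -/
def Psi (r : ℝ → ℝ) (p : ℝ × ℝ) : ℝ × ℝ :=
  (p.1 - Real.arctan (p.2 * r p.1 / (r p.1 - p.2 * deriv r p.1)),
   p.1 + Real.arctan (p.2 * r p.1 / (r p.1 + p.2 * deriv r p.1)))

/-- The quotient rule and `1 + (f/g)² = (g² + f²)/g²` combine to a formula without division
by `g`. -/
lemma hasDerivAt_arctan_div {f g : ℝ → ℝ} {f' g' x : ℝ} (hf : HasDerivAt f f' x)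
    (hg : HasDerivAt g g' x) (hx : g x ≠ 0) :
    HasDerivAt (fun y => Real.arctan (f y / g y))
      ((f' * g x - f x * g') / (g x ^ 2 + f x ^ 2)) x := by
  have h := (hf.fun_div hg hx).arctan
  convert h using 1
  have : g x ^ 2 + f x ^ 2 ≠ 0 := by positivity
  field_simp

/-- The chain rule along a curve `c` with velocity `v`, on which `S ∘ Ψ` is known to agree with
`t r²`. -/
lemma fderiv_eq_of_curve {r : ℝ → ℝ} {S : ℝ × ℝ → ℝ} {L : ℝ × ℝ →L[ℝ] ℝ} {q : ℝ × ℝ}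
    (hL : HasFDerivAt S L (Psi r q))
    (hval : ∀ᶠ q' : ℝ × ℝ in nhds q, S (Psi r q') = q'.2 * r q'.1 ^ 2)
    {c : ℝ → ℝ × ℝ} {x v₀ v₁ w : ℝ} (hc : ContinuousAt c x) (hcx : c x = q)
    (h₀ : HasDerivAt (fun y => (Psi r (c y)).1) v₀ x)
    (h₁ : HasDerivAt (fun y => (Psi r (c y)).2) v₁ x)
    (hw : HasDerivAt (fun y => (c y).2 * r (c y).1 ^ 2) w x) :
    v₀ * L (1, 0) + v₁ * L (0, 1) = w := by
  subst hcx
  have hP : HasDerivAt (fun y => Psi r (c y)) (v₀, v₁) x := h₀.prodMk h₁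
  have h := hL.comp_hasDerivAt x hP
  have he : (S ∘ fun y => Psi r (c y)) =ᶠ[nhds x] fun y => (c y).2 * r (c y).1 ^ 2 :=
    hc.eventually hval
  have := (h.congr_of_eventuallyEq he.symm).unique hw
  rw [← this, show ((v₀, v₁) : ℝ × ℝ) = v₀ • (1, 0) + v₁ • (0, 1) by simp, map_add, map_smul,
    map_smul, smul_eq_mul, smul_eq_mul]

/-- If `S` is `C¹` near `Ψ(φ,t)` and `S ∘ Ψ = t r(φ)²` near `(φ,t)`, then the
partial derivatives of `S` at `Ψ(φ,t)` are `−r₀²/2` and `r₁²/2`. -/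
theorem generating_function_first_derivatives
    (r : ℝ → ℝ) (hr : ContDiff ℝ 2 r) (hper : ∀ φ, r (φ + 2 * π) = r φ)
    (hpos : ∀ φ, 0 < r φ) (hchi : ∀ φ, 0 < chiF r φ)
    (φ t : ℝ) (ht : 0 < t)
    (h0 : 0 < r φ - t * deriv r φ) (h1 : 0 < r φ + t * deriv r φ)
    (S : ℝ × ℝ → ℝ) (U : Set (ℝ × ℝ)) (hU : IsOpen U) (hmem : Psi r (φ, t) ∈ U)
    (hS : ContDiffOn ℝ 1 S U)
    (hval : ∀ᶠ q : ℝ × ℝ in nhds (φ, t), S (Psi r q) = q.2 * r q.1 ^ 2) :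
    deriv (fun a => S (a, (Psi r (φ, t)).2)) ((Psi r (φ, t)).1) = -(r0sq r φ t) / 2 ∧
    deriv (fun b => S ((Psi r (φ, t)).1, b)) ((Psi r (φ, t)).2) = r1sq r φ t / 2 := by
  have hr1 : HasDerivAt r (deriv r φ) φ :=
    (hr.differentiable (by norm_num) φ).hasDerivAt
  have hr2 : HasDerivAt (deriv r) (deriv (deriv r) φ) φ := by
    have h : ContDiff ℝ 1 (deriv r) := ((contDiff_succ_iff_deriv (n := 1)).1 hr).2.2
    exact (h.differentiable (by norm_num) φ).hasDerivAt
  have hL : HasFDerivAt S (fderiv ℝ S (Psi r (φ, t))) (Psi r (φ, t)) :=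
    ((hS.contDiffAt (hU.mem_nhds hmem)).differentiableAt (by norm_num)).hasFDerivAt
  generalize fderiv ℝ S (Psi r (φ, t)) = L at hL
  -- The partial derivatives of `S` are the values of `L` on the standard basis.
  have hα : deriv (fun a => S (a, (Psi r (φ, t)).2)) ((Psi r (φ, t)).1) = L (1, 0) :=
    (hL.comp_hasDerivAt (f := fun a => (a, (Psi r (φ, t)).2)) _
      ((hasDerivAt_id _).prodMk (hasDerivAt_const _ _))).deriv
  have hβ : deriv (fun b => S ((Psi r (φ, t)).1, b)) ((Psi r (φ, t)).2) = L (0, 1) :=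
    (hL.comp_hasDerivAt (f := fun b => ((Psi r (φ, t)).1, b)) _
      ((hasDerivAt_const _ _).prodMk (hasDerivAt_id _))).deriv
  rw [hα, hβ]
  have ht1 : HasDerivAt (fun y : ℝ => y * r φ) (1 * r φ) t := (hasDerivAt_id t).mul_const _
  have ht2 : HasDerivAt (fun y : ℝ => y * deriv r φ) (1 * deriv r φ) t :=
    (hasDerivAt_id t).mul_const _
  have et := fderiv_eq_of_curve hL hval (c := fun y => (φ, y)) (x := t) (by fun_prop) rfl
    ((hasDerivAt_arctan_div ht1 (ht2.const_sub (r φ)) h0.ne').const_sub φ)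
    ((hasDerivAt_arctan_div ht1 (ht2.const_add (r φ)) h1.ne').const_add φ)
    ((hasDerivAt_id t).mul_const (r φ ^ 2))
  have eφ := fderiv_eq_of_curve hL hval (c := fun y => (y, t)) (x := φ) (by fun_prop) rfl
    ((hasDerivAt_id φ).fun_sub
      (hasDerivAt_arctan_div (hr1.const_mul t) (hr1.fun_sub (hr2.const_mul t)) h0.ne'))
    ((hasDerivAt_id φ).fun_add
      (hasDerivAt_arctan_div (hr1.const_mul t) (hr1.fun_add (hr2.const_mul t)) h1.ne'))
    ((hr1.fun_pow 2).const_mul t)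
  have hR := hpos φ
  have hχ := hchi φ
  simp only [chiF] at hχ
  simp only [r0sq, r1sq]
  generalize L (1, 0) = α at *
  generalize L (0, 1) = β at *
  generalize r φ = R at *
  generalize deriv r φ = p at *
  generalize deriv (deriv r) φ = s at *
  have hA : 0 < (R - t * p) ^ 2 + (t * R) ^ 2 := by positivity
  have hB : 0 < (R + t * p) ^ 2 + (t * R) ^ 2 := by positivity
  obtain ⟨a, rfl⟩ : ∃ a, α = a * ((R - t * p) ^ 2 + (t * R) ^ 2) :=
    ⟨α / _, (div_mul_cancel₀ _ hA.ne').symm⟩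
  obtain ⟨b, rfl⟩ : ∃ b, β = b * ((R + t * p) ^ 2 + (t * R) ^ 2) :=
    ⟨β / _, (div_mul_cancel₀ _ hB.ne').symm⟩
  have e1 : b - a = 1 := by
    have h : R ^ 2 * (b - a) = R ^ 2 * 1 := by
      field_simp at et
      linear_combination R * et
    exact mul_left_cancel₀ (by positivity) h
  have e2 : a * (R ^ 2 - 2 * t * R * p + t ^ 2 * (R ^ 2 + 2 * p ^ 2 - R * s)) +
      b * (R ^ 2 + 2 * t * R * p + t ^ 2 * (R ^ 2 + 2 * p ^ 2 - R * s)) = 2 * t * R * p := by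
    field_simp at eφ
    linear_combination eφ
  have hdet : 0 < R ^ 2 + t ^ 2 * (R ^ 2 + 2 * p ^ 2 - R * s) := by positivity
  have e3 : a + b = 0 := by
    refine (mul_eq_zero.1 ?_).resolve_right hdet.ne'
    linear_combination e2 - 2 * t * R * p * e1
  obtain rfl : a = -1 / 2 := by linarith
  obtain rfl : b = 1 / 2 := by linarith
  constructor <;> ring
end
end

section
/- Let r : ℝ → ℝ be a C², 2π-periodic function with r > 0 and χ := r² + 2r′² − r r″ > 0 everywhere, and let (φ, t) satisfy t > 0, r(φ) − t r′(φ) > 0 and r(φ) + t r′(φ) > 0. Then the partial derivatives of Ψ = (φ₀, φ₁) at (φ,t) are: ∂φ₀/∂φ = 1 − t²(r² + r′² − χ)/r₀², ∂φ₀/∂t = −r²/r₀², ∂φ₁/∂φ = 1 − t²(r² + r′² − χ)/r₁², ∂φ₁/∂t = r²/r₁², where r, r′, χ are evaluated at φ and r₀², r₁² at (φ,t). -/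
/-! With `N = t r` and `D = r ∓ t r′`, both components of `Ψ` are `φ ∓ arctan (N / D)`, and where
`D ≠ 0` the derivative of `arctan (N / D)` is `(N′ D - N D′) / (D² + N²)`. The denominator is `r₀²`
resp. `r₁²`. The numerator is `r²` for the `t`-derivative, and `∓ t² (r′² - r r″)` for the
`φ`-derivative, where `r² + r′² - χ = r r″ - r′²`. -/

open Real

noncomputable section

lemma hasDerivAt_arctan_div_s5 {N D : ℝ → ℝ} {N' D' x : ℝ} (hN : HasDerivAt N N' x)
    (hD : HasDerivAt D D' x) (h : D x ≠ 0) :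
    HasDerivAt (fun y => Real.arctan (N y / D y))
      ((N' * D x - N x * D') / (D x ^ 2 + N x ^ 2)) x := by
  have hs : D x ^ 2 + N x ^ 2 ≠ 0 := by positivity
  have hq : 1 + (N x / D x) ^ 2 ≠ 0 := by positivity
  convert (hN.fun_div hD h).arctan using 1
  field_simp

/-- The partial derivatives of `Ψ = (φ₀, φ₁)` at `(φ,t)`. -/
theorem change_of_variables_partial_derivatives
    (r : ℝ → ℝ) (hr : ContDiff ℝ 2 r) (hper : ∀ φ, r (φ + 2 * π) = r φ)
    (hpos : ∀ φ, 0 < r φ) (hchi : ∀ φ, 0 < chiF r φ)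
    (φ t : ℝ) (ht : 0 < t)
    (h0 : 0 < r φ - t * deriv r φ) (h1 : 0 < r φ + t * deriv r φ) :
    deriv (fun a => (Psi r (a, t)).1) φ
        = 1 - t ^ 2 * (r φ ^ 2 + (deriv r φ) ^ 2 - chiF r φ) / r0sq r φ t ∧
    deriv (fun τ => (Psi r (φ, τ)).1) t = -(r φ ^ 2) / r0sq r φ t ∧
    deriv (fun a => (Psi r (a, t)).2) φ
        = 1 - t ^ 2 * (r φ ^ 2 + (deriv r φ) ^ 2 - chiF r φ) / r1sq r φ t ∧
    deriv (fun τ => (Psi r (φ, τ)).2) t = r φ ^ 2 / r1sq r φ t := by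
  have hr1 : HasDerivAt r (deriv r φ) φ :=
    (hr.differentiable (by norm_num)).differentiableAt.hasDerivAt
  have hr2 : HasDerivAt (deriv r) (deriv (deriv r) φ) φ := by
    have hd : ContDiff ℝ 1 (deriv r) := ((contDiff_succ_iff_deriv (n := 1)).1 hr).2.2
    exact (hd.differentiable (by norm_num)).differentiableAt.hasDerivAt
  have hid := hasDerivAt_id' t
  refine ⟨?_, ?_, ?_, ?_⟩
  · have h := (hasDerivAt_id' φ).fun_sub (hasDerivAt_arctan_div_s5 (hr1.const_mul t)
      (hr1.fun_sub (hr2.const_mul t)) h0.ne')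
    refine h.deriv.trans ?_
    simp only [r0sq, chiF, mul_pow]
    ring
  · have h := (hasDerivAt_arctan_div_s5 (hid.mul_const (r φ))
      ((hid.mul_const (deriv r φ)).const_sub (r φ)) h0.ne').const_sub φ
    refine h.deriv.trans ?_
    simp only [r0sq, mul_pow]
    ring
  · have h := (hasDerivAt_id' φ).fun_add (hasDerivAt_arctan_div_s5 (hr1.const_mul t)
      (hr1.fun_add (hr2.const_mul t)) h1.ne')
    refine h.deriv.trans ?_
    simp only [r1sq, chiF, mul_pow]
    ring
  · have h := (hasDerivAt_arctan_div_s5 (hid.mul_const (r φ))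
      ((hid.mul_const (deriv r φ)).const_add (r φ)) h1.ne').const_add φ
    refine h.deriv.trans ?_
    simp only [r1sq, mul_pow]
    ring
end
end

section
/- Let r : ℝ → ℝ be a C², 2π-periodic function with r > 0 and χ := r² + 2r′² − r r″ > 0 everywhere, and let (φ, t) satisfy t > 0, r(φ) − t r′(φ) > 0 and r(φ) + t r′(φ) > 0. Then the Jacobian determinant of Ψ at (φ,t) equals 2 r² (χ t² + r²) / (r₀² r₁²) (with r, χ evaluated at φ and r₀², r₁² at (φ,t)); in particular it is strictly positive, so Ψ is a local C¹-diffeomorphism at (φ,t). -/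
/-!
With `a = r`, `b = r'`, `c = r''` at `φ`, the function `arctan (t a / (a + ε t b))` has
partial derivatives `ε t² (b² - a c) / D` in `φ` and `a² / D` in `t`, where
`D = (a + ε t b)² + t² a²`. The cases `ε = ∓1` are the two components of `Ψ`, and there `D` is
`r₀²`, respectively `r₁²`. Since `r₀² + r₁² = 2 (a² + t² (a² + b²))`, the determinant of the
resulting `2 × 2` matrix collapses to `2 a² (χ t² + a²) / (r₀² r₁²)`.

The hypotheses `r > 0` and `χ > 0` are global, so this determinant is positive at every point of
the open set `r ± t r' > 0`. The inverse function theorem at `(φ, t)` gives a local inverse, which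
is `C¹` at the image of each point of its domain lying in this open set.
-/

open Real

noncomputable section

/-- The common form of the two arctangents in `Ψ`: the first one has `ε = -1`, the second one
`ε = 1`. -/
lemma hasFDerivAt_arctan_aux (r : ℝ → ℝ) (hr : ContDiff ℝ 2 r) (ε : ℝ) (p : ℝ × ℝ)
    (hd : r p.1 + ε * (p.2 * deriv r p.1) ≠ 0) :
    HasFDerivAt (fun q : ℝ × ℝ => arctan (q.2 * r q.1 / (r q.1 + ε * (q.2 * deriv r q.1))))
      ((ε * p.2 ^ 2 * (deriv r p.1 ^ 2 - r p.1 * deriv (deriv r) p.1) /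
          ((r p.1 + ε * (p.2 * deriv r p.1)) ^ 2 + p.2 ^ 2 * r p.1 ^ 2)) •
            ContinuousLinearMap.fst ℝ ℝ ℝ +
        (r p.1 ^ 2 / ((r p.1 + ε * (p.2 * deriv r p.1)) ^ 2 + p.2 ^ 2 * r p.1 ^ 2)) •
            ContinuousLinearMap.snd ℝ ℝ ℝ) p := by
  have hr' : ContDiff ℝ 1 (deriv r) :=
    ((contDiff_succ_iff_deriv (n := 1) (f := r)).1 (by simpa [one_add_one_eq_two] using hr)).2.2
  have e1 : HasFDerivAt (fun q : ℝ × ℝ => r q.1)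
      (deriv r p.1 • ContinuousLinearMap.fst ℝ ℝ ℝ) p :=
    ((hr.differentiable (by norm_num)) p.1).hasDerivAt.comp_hasFDerivAt p hasFDerivAt_fst
  have e2 : HasFDerivAt (fun q : ℝ × ℝ => deriv r q.1)
      (deriv (deriv r) p.1 • ContinuousLinearMap.fst ℝ ℝ ℝ) p :=
    ((hr'.differentiable (by norm_num)) p.1).hasDerivAt.comp_hasFDerivAt p hasFDerivAt_fst
  have e3 : HasFDerivAt (fun q : ℝ × ℝ => q.2) (ContinuousLinearMap.snd ℝ ℝ ℝ) p :=
    hasFDerivAt_snd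
  have h := ((e3.mul e1).mul ((hasDerivAt_inv hd).comp_hasFDerivAt p
    (e1.add ((e3.mul e2).const_mul ε)))).arctan
  have hD : (r p.1 + ε * (p.2 * deriv r p.1)) ^ 2 + p.2 ^ 2 * r p.1 ^ 2 ≠ 0 := by positivity
  refine h.congr_fderiv ?_
  have key : ∀ d : ℝ, d ≠ 0 → d ^ 2 + p.2 ^ 2 * r p.1 ^ 2 ≠ 0 →
      (1 + (p.2 * r p.1 * d⁻¹) ^ 2)⁻¹ = d ^ 2 / (d ^ 2 + p.2 ^ 2 * r p.1 ^ 2) := by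
    intro d hd hD
    rw [inv_eq_iff_eq_inv, inv_div]
    field_simp
  -- The denominator is kept opaque while clearing fractions and expanded only afterwards.
  obtain ⟨d, hdd⟩ : ∃ d, d = r p.1 + ε * (p.2 * deriv r p.1) := ⟨_, rfl⟩
  ext <;> simp <;> rw [← hdd] at hd hD ⊢ <;> rw [key d hd hD] <;> field_simp <;> rw [hdd] <;> ring

/-- The open set `r ± t r' > 0`, on which `Ψ` is a `C¹` map. -/
def regDom (r : ℝ → ℝ) : Set (ℝ × ℝ) :=
  {p | 0 < r p.1 - p.2 * deriv r p.1 ∧ 0 < r p.1 + p.2 * deriv r p.1}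

lemma hasFDerivAt_Psi (r : ℝ → ℝ) (hr : ContDiff ℝ 2 r) (p : ℝ × ℝ) (hp : p ∈ regDom r) :
    HasFDerivAt (Psi r)
      (((1 + p.2 ^ 2 * (deriv r p.1 ^ 2 - r p.1 * deriv (deriv r) p.1) / r0sq r p.1 p.2) •
            ContinuousLinearMap.fst ℝ ℝ ℝ +
        (-(r p.1 ^ 2 / r0sq r p.1 p.2)) • ContinuousLinearMap.snd ℝ ℝ ℝ).prod
      ((1 + p.2 ^ 2 * (deriv r p.1 ^ 2 - r p.1 * deriv (deriv r) p.1) / r1sq r p.1 p.2) •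
            ContinuousLinearMap.fst ℝ ℝ ℝ +
        (r p.1 ^ 2 / r1sq r p.1 p.2) • ContinuousLinearMap.snd ℝ ℝ ℝ)) p := by
  obtain ⟨h0, h1⟩ := hp
  have a0 := hasFDerivAt_arctan_aux r hr (-1) p (by linarith)
  have a1 := hasFDerivAt_arctan_aux r hr 1 p (by linarith)
  simp only [neg_one_mul, one_mul, ← sub_eq_add_neg] at a0 a1
  refine ((hasFDerivAt_fst.sub a0).prodMk (hasFDerivAt_fst.add a1)).congr_fderiv ?_
  ext <;> simp [r0sq, r1sq, neg_div]

lemma det_fderiv_Psi (r : ℝ → ℝ) (hr : ContDiff ℝ 2 r) (p : ℝ × ℝ)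
    (hp : p ∈ regDom r) :
    LinearMap.det ((fderiv ℝ (Psi r) p).toLinearMap)
      = 2 * r p.1 ^ 2 * (chiF r p.1 * p.2 ^ 2 + r p.1 ^ 2) /
        (r0sq r p.1 p.2 * r1sq r p.1 p.2) := by
  rw [(hasFDerivAt_Psi r hr p hp).fderiv,
    ← LinearMap.det_toMatrix (Module.Basis.finTwoProd ℝ), Matrix.det_fin_two]
  obtain ⟨h0, h1⟩ := hp
  have d0 : r0sq r p.1 p.2 ≠ 0 := by unfold r0sq; positivity
  have d1 : r1sq r p.1 p.2 ≠ 0 := by unfold r1sq; positivity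
  simp [LinearMap.toMatrix_apply]
  field_simp
  simp only [r0sq, r1sq, chiF]
  ring

lemma det_fderiv_Psi_pos (r : ℝ → ℝ) (hr : ContDiff ℝ 2 r) (hpos : ∀ φ, 0 < r φ)
    (hchi : ∀ φ, 0 < chiF r φ) (p : ℝ × ℝ) (hp : p ∈ regDom r) :
    0 < LinearMap.det ((fderiv ℝ (Psi r) p).toLinearMap) := by
  rw [det_fderiv_Psi r hr p hp]
  obtain ⟨h0, h1⟩ := hp
  have d0 : 0 < r0sq r p.1 p.2 := by unfold r0sq; positivity
  have d1 : 0 < r1sq r p.1 p.2 := by unfold r1sq; positivity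
  have := hpos p.1
  have := hchi p.1
  positivity

lemma contDiffAt_Psi (r : ℝ → ℝ) (hr : ContDiff ℝ 2 r) (p : ℝ × ℝ) (hp : p ∈ regDom r) :
    ContDiffAt ℝ 1 (Psi r) p := by
  have hr' : ContDiff ℝ 1 (deriv r) :=
    ((contDiff_succ_iff_deriv (n := 1) (f := r)).1 (by simpa [one_add_one_eq_two] using hr)).2.2
  have hr1 : ContDiff ℝ 1 r := hr.of_le (by norm_num)
  have c1 : ContDiffAt ℝ 1 (fun q : ℝ × ℝ => r q.1) p := (hr1.comp contDiff_fst).contDiffAt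
  have c2 : ContDiffAt ℝ 1 (fun q : ℝ × ℝ => deriv r q.1) p :=
    (hr'.comp contDiff_fst).contDiffAt
  have c3 : ContDiffAt ℝ 1 (fun q : ℝ × ℝ => q.2) p := contDiffAt_snd
  exact (contDiffAt_fst.sub ((c3.mul c1).div (c1.sub (c3.mul c2)) hp.1.ne').arctan).prodMk
    (contDiffAt_fst.add ((c3.mul c1).div (c1.add (c3.mul c2)) hp.2.ne').arctan)

lemma isOpen_regDom (r : ℝ → ℝ) (hr : ContDiff ℝ 2 r) : IsOpen (regDom r) := by
  have c1 : Continuous r := hr.continuous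
  have c2 : Continuous (deriv r) := hr.continuous_deriv (by norm_num)
  have o0 : IsOpen {p : ℝ × ℝ | 0 < r p.1 - p.2 * deriv r p.1} :=
    isOpen_lt continuous_const (by fun_prop)
  have o1 : IsOpen {p : ℝ × ℝ | 0 < r p.1 + p.2 * deriv r p.1} :=
    isOpen_lt continuous_const (by fun_prop)
  exact o0.inter o1

/-- The Jacobian determinant of `Ψ` at `(φ,t)` equals
`2 r² (χ t² + r²) / (r₀² r₁²) > 0`, and `Ψ` is a local `C¹`-diffeomorphism at `(φ,t)`. -/
theorem change_of_variables_jacobian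
    (r : ℝ → ℝ) (hr : ContDiff ℝ 2 r) (hper : ∀ φ, r (φ + 2 * π) = r φ)
    (hpos : ∀ φ, 0 < r φ) (hchi : ∀ φ, 0 < chiF r φ)
    (φ t : ℝ) (ht : 0 < t)
    (h0 : 0 < r φ - t * deriv r φ) (h1 : 0 < r φ + t * deriv r φ) :
    LinearMap.det ((fderiv ℝ (Psi r) (φ, t)).toLinearMap)
        = 2 * r φ ^ 2 * (chiF r φ * t ^ 2 + r φ ^ 2) / (r0sq r φ t * r1sq r φ t) ∧
    0 < LinearMap.det ((fderiv ℝ (Psi r) (φ, t)).toLinearMap) ∧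
    ∃ U V : Set (ℝ × ℝ), IsOpen U ∧ IsOpen V ∧ (φ, t) ∈ U ∧ Psi r '' U = V ∧
      Set.InjOn (Psi r) U ∧ ContDiffOn ℝ 1 (Psi r) U ∧
      ∃ g : ℝ × ℝ → ℝ × ℝ, ContDiffOn ℝ 1 g V ∧ ∀ x ∈ U, g (Psi r x) = x := by
  have hmem : ((φ, t) : ℝ × ℝ) ∈ regDom r := ⟨h0, h1⟩
  refine ⟨det_fderiv_Psi r hr _ hmem, det_fderiv_Psi_pos r hr hpos hchi _ hmem, ?_⟩
  have hF : ∀ p ∈ regDom r, ∃ f' : (ℝ × ℝ) ≃L[ℝ] (ℝ × ℝ),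
      HasFDerivAt (Psi r) (f' : (ℝ × ℝ) →L[ℝ] (ℝ × ℝ)) p := fun p hp =>
    ⟨(fderiv ℝ (Psi r) p).toContinuousLinearEquivOfDetNeZero
      (det_fderiv_Psi_pos r hr hpos hchi p hp).ne', by
        rw [ContinuousLinearMap.coe_toContinuousLinearEquivOfDetNeZero]
        exact (hasFDerivAt_Psi r hr p hp).differentiableAt.hasFDerivAt⟩
  obtain ⟨f', hf'⟩ := hF _ hmem
  have hc := contDiffAt_Psi r hr _ hmem
  let e := hc.toOpenPartialHomeomorph (Psi r) hf' one_ne_zero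
  have he : ∀ x, e x = Psi r x := fun _ => rfl
  have hU : IsOpen (e.source ∩ regDom r) := e.open_source.inter (isOpen_regDom r hr)
  refine ⟨e.source ∩ regDom r, Psi r '' (e.source ∩ regDom r), hU,
    e.isOpen_image_of_subset_source hU Set.inter_subset_left,
    ⟨hc.mem_toOpenPartialHomeomorph_source hf' one_ne_zero, hmem⟩, rfl,
    e.injOn.mono Set.inter_subset_left,
    fun p hp => (contDiffAt_Psi r hr p hp.2).contDiffWithinAt,
    e.symm, ?_, fun x hx => e.left_inv hx.1⟩
  rintro _ ⟨p, hp, rfl⟩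
  obtain ⟨g', hg'⟩ := hF p hp.2
  refine (e.contDiffAt_symm (f₀' := g') (e.map_source hp.1) ?_ ?_).contDiffWithinAt
  · rw [e.left_inv hp.1]; exact hg'
  · rw [e.left_inv hp.1]; exact contDiffAt_Psi r hr p hp.2
end
end

section
/- Let r : ℝ → ℝ be a C², 2π-periodic function with r > 0 and χ := r² + 2r′² − r r″ > 0 everywhere, and let (φ, t) satisfy t > 0, r(φ) − t r′(φ) > 0 and r(φ) + t r′(φ) > 0. Then the inverse of the Jacobian matrix DΨ(φ,t) is the 2×2 matrix whose first row (the partial derivatives of φ with respect to φ₀ and φ₁) is ( r₀²/(2(χt² + r²)), r₁²/(2(χt² + r²)) ) and whose second row (the partial derivatives of t with respect to φ₀ and φ₁) is ( −r₀²(χt² + r² + 2 t r r′)/(2 r² (χt² + r²)), r₁²(χt² + r² − 2 t r r′)/(2 r² (χt² + r²)) ), where r, r′, χ are evaluated at φ and r₀², r₁² at (φ,t). -/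
/-!
The angle `φ₀ = φ - arctan (t r / (r - t r'))` and the angle `φ₁ = φ + arctan (t r / (r + t r'))`
are both governed by the function `arctan (t r / (r + s t r'))`, with `s = -1` and `s = 1`.
Its differential is `(s t² (r'² - r r'') dφ + r² dt) / ((r + s t r')² + t² r²)`
(`hasFDerivAt_arctan_quot`). Writing `S = χ t² + r²`, this gives the Jacobian matrix
`DΨ = [[(S - 2 t r r') / r₀², -r² / r₀²], [(S + 2 t r r') / r₁², r² / r₁²]]`
(`fderiv_Psi_apply`), whose determinant is `2 r² S / (r₀² r₁²) > 0`. The claim is then the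
explicit inversion of a `2 × 2` matrix.
-/

open Real

noncomputable section

/-- The differential of `(φ, t) ↦ arctan (t r / (r + s t r'))`; the signs `s = -1` and `s = 1`
occur in the two components of `Psi`. -/
theorem hasFDerivAt_arctan_quot (r : ℝ → ℝ) (hr : ContDiff ℝ 2 r) (s φ t : ℝ)
    (hD : r φ + s * t * deriv r φ ≠ 0) :
    HasFDerivAt
      (fun p : ℝ × ℝ => Real.arctan (p.2 * r p.1 / (r p.1 + s * p.2 * deriv r p.1)))
      ((s * t ^ 2 * (deriv r φ ^ 2 - r φ * deriv (deriv r) φ) /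
            ((r φ + s * t * deriv r φ) ^ 2 + t ^ 2 * r φ ^ 2)) • ContinuousLinearMap.fst ℝ ℝ ℝ
        + (r φ ^ 2 / ((r φ + s * t * deriv r φ) ^ 2 + t ^ 2 * r φ ^ 2)) •
            ContinuousLinearMap.snd ℝ ℝ ℝ) (φ, t) := by
  have hd : ContDiff ℝ 1 (deriv r) :=
    ((contDiff_succ_iff_deriv (n := 1)).1 (by simpa [one_add_one_eq_two] using hr)).2.2
  have hfst : HasFDerivAt (fun p : ℝ × ℝ => p.1) (ContinuousLinearMap.fst ℝ ℝ ℝ) (φ, t) :=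
    hasFDerivAt_fst
  have hsnd : HasFDerivAt (fun p : ℝ × ℝ => p.2) (ContinuousLinearMap.snd ℝ ℝ ℝ) (φ, t) :=
    hasFDerivAt_snd
  have e1 : HasFDerivAt (fun p : ℝ × ℝ => r p.1)
      (deriv r φ • ContinuousLinearMap.fst ℝ ℝ ℝ) (φ, t) :=
    ((hr.differentiable (by norm_num)) φ).hasDerivAt.comp_hasFDerivAt (φ, t) hfst
  have e2 : HasFDerivAt (fun p : ℝ × ℝ => deriv r p.1)
      (deriv (deriv r) φ • ContinuousLinearMap.fst ℝ ℝ ℝ) (φ, t) :=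
    HasDerivAt.comp_hasFDerivAt (h₂ := deriv r) (φ, t)
      ((hd.differentiable (by norm_num)) φ).hasDerivAt hfst
  have hden := e1.add ((hsnd.const_mul s).mul e2)
  have hinv : HasFDerivAt (fun p : ℝ × ℝ => (r p.1 + s * p.2 * deriv r p.1)⁻¹) _ (φ, t) :=
    HasDerivAt.comp_hasFDerivAt (h₂ := fun x : ℝ => x⁻¹) (φ, t) (hasDerivAt_inv hD) hden
  have hquot : HasFDerivAt
      (fun p : ℝ × ℝ => p.2 * r p.1 / (r p.1 + s * p.2 * deriv r p.1)) _ (φ, t) :=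
    (hsnd.mul e1).mul hinv
  refine hquot.arctan.congr_fderiv ?_
  have hpos : (r φ + s * t * deriv r φ) ^ 2 + t ^ 2 * r φ ^ 2 ≠ 0 := by positivity
  have hq' : 1 + (t * r φ / (r φ + s * t * deriv r φ)) ^ 2
      = ((r φ + s * t * deriv r φ) ^ 2 + t ^ 2 * r φ ^ 2) / (r φ + s * t * deriv r φ) ^ 2 := by
    rw [add_div, div_self (pow_ne_zero 2 hD), div_pow, mul_pow]
  ext <;> simp <;> rw [hq'] <;> field_simp <;> ring

/-- The Jacobian matrix of `Psi`, written with `χ t² + r²`. -/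
theorem fderiv_Psi_apply (r : ℝ → ℝ) (hr : ContDiff ℝ 2 r) (φ t : ℝ)
    (h0 : 0 < r φ - t * deriv r φ) (h1 : 0 < r φ + t * deriv r φ) (v : ℝ × ℝ) :
    fderiv ℝ (Psi r) (φ, t) v =
      ((chiF r φ * t ^ 2 + r φ ^ 2 - 2 * t * r φ * deriv r φ) / r0sq r φ t * v.1
          - r φ ^ 2 / r0sq r φ t * v.2,
       (chiF r φ * t ^ 2 + r φ ^ 2 + 2 * t * r φ * deriv r φ) / r1sq r φ t * v.1
          + r φ ^ 2 / r1sq r φ t * v.2) := by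
  have hfst : HasFDerivAt (fun p : ℝ × ℝ => p.1) (ContinuousLinearMap.fst ℝ ℝ ℝ) (φ, t) :=
    hasFDerivAt_fst
  have a0 := hasFDerivAt_arctan_quot r hr (-1) φ t (by linarith)
  have a1 := hasFDerivAt_arctan_quot r hr 1 φ t (by linarith)
  simp only [neg_mul, one_mul, ← sub_eq_add_neg] at a0 a1
  have h := (hfst.sub a0).prodMk (hfst.add a1)
  have hP : HasFDerivAt (Psi r) _ (φ, t) := h
  have p0 : (r φ - t * deriv r φ) ^ 2 + t ^ 2 * r φ ^ 2 ≠ 0 := by positivity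
  have p1 : (r φ + t * deriv r φ) ^ 2 + t ^ 2 * r φ ^ 2 ≠ 0 := by positivity
  rw [hP.fderiv]
  ext
  · simp [r0sq, chiF]
    field_simp
    ring
  · simp [r1sq, chiF]
    field_simp
    ring

/-- The inverse of the Jacobian matrix `DΨ(φ,t)`: its first row gives
`∂φ/∂φ₀, ∂φ/∂φ₁` and its second row gives `∂t/∂φ₀, ∂t/∂φ₁`. -/
theorem change_of_variables_inverse_jacobian
    (r : ℝ → ℝ) (hr : ContDiff ℝ 2 r) (hper : ∀ φ, r (φ + 2 * π) = r φ)
    (hpos : ∀ φ, 0 < r φ) (hchi : ∀ φ, 0 < chiF r φ)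
    (φ t : ℝ) (ht : 0 < t)
    (h0 : 0 < r φ - t * deriv r φ) (h1 : 0 < r φ + t * deriv r φ) :
    ∃ B : ℝ × ℝ → ℝ × ℝ,
      (∀ v : ℝ × ℝ, B v =
        (r0sq r φ t / (2 * (chiF r φ * t ^ 2 + r φ ^ 2)) * v.1
            + r1sq r φ t / (2 * (chiF r φ * t ^ 2 + r φ ^ 2)) * v.2,
         -(r0sq r φ t * (chiF r φ * t ^ 2 + r φ ^ 2 + 2 * t * r φ * deriv r φ))
              / (2 * r φ ^ 2 * (chiF r φ * t ^ 2 + r φ ^ 2)) * v.1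
            + r1sq r φ t * (chiF r φ * t ^ 2 + r φ ^ 2 - 2 * t * r φ * deriv r φ)
              / (2 * r φ ^ 2 * (chiF r φ * t ^ 2 + r φ ^ 2)) * v.2)) ∧
      ∀ v : ℝ × ℝ,
        fderiv ℝ (Psi r) (φ, t) (B v) = v ∧ B (fderiv ℝ (Psi r) (φ, t) v) = v := by
  have hr0 : r0sq r φ t ≠ 0 := by unfold r0sq; positivity
  have hr1 : r1sq r φ t ≠ 0 := by unfold r1sq; positivity
  have hrφ : r φ ≠ 0 := (hpos φ).ne'
  have hS : chiF r φ * t ^ 2 + r φ ^ 2 ≠ 0 := by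
    have := hchi φ
    have := hpos φ
    positivity
  refine ⟨_, fun v => rfl, fun v => ?_⟩
  rw [fderiv_Psi_apply r hr φ t h0 h1, fderiv_Psi_apply r hr φ t h0 h1]
  -- Only the nonvanishing of these quantities matters from here on.
  generalize r0sq r φ t = R0 at *
  generalize r1sq r φ t = R1 at *
  generalize hSdef : chiF r φ * t ^ 2 + r φ ^ 2 = S at *
  constructor <;> ext <;> simp only <;> field_simp <;> ring
end
end

section
/- Let r : ℝ → ℝ be a C², 2π-periodic function with r > 0 and χ := r² + 2r′² − r r″ > 0 everywhere, and let (φ, t) satisfy t > 0, r(φ) − t r′(φ) > 0 and r(φ) + t r′(φ) > 0. Suppose S is a C² real-valued function on an open neighborhood of Ψ(φ,t) in ℝ² such that S(Ψ(φ′, t′)) = t′ r(φ′)² for all (φ′, t′) in a neighborhood of (φ, t). Then the pure second partial derivatives of S at Ψ(φ,t) are: ∂²S/∂φ₀² = r₀² ( χ t (t² − 1) r² + 2 t r⁴ − 2 r³ r′ + t (χ t² + 2 r²) r′² ) / (2 r² (χ t² + r²)) and ∂²S/∂φ₁² = r₁² ( χ t (t² − 1) r² + 2 t r⁴ + 2 r³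 r′ + t (χ t² + 2 r²) r′² ) / (2 r² (χ t² + r²)), where r, r′, χ are evaluated at φ and r₀², r₁² at (φ,t). -/
/-!
The map `Ψ` is differentiable, with `∂φ₀/∂φ = (A - B)/r₀²`, `∂φ₁/∂φ = (A + B)/r₁²`,
`∂φ₀/∂t = -r²/r₀²`, `∂φ₁/∂t = r²/r₁²`, where `A = r² + t²χ` and `B = 2 t r r'`
(`hasDerivAt_Psi_fst`, `hasDerivAt_Psi_snd`). Differentiating an identity `F ∘ Ψ = G` thus gives two
linear equations for the partial derivatives of `F`, of determinant `2 r² A / (r₀² r₁²) > 0`; they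
are solved by Cramer's rule in `chain_Psi`.

For `F = S`, `G = t r²` the solution is `∂S/∂φ₀ = -r₀²/2` and `∂S/∂φ₁ = r₁²/2` on a whole
neighbourhood (`gradient_S`). These values contain no second derivative of `r`, so they can be
differentiated again: applying `chain_Psi` to `F = ∂S/∂φ₀` and to `F = ∂S/∂φ₁` yields the pure
second derivatives. Neither the inverse function theorem nor the symmetry of the Hessian is needed.
-/

open Real

noncomputable section

lemma hasDerivAt_r {r : ℝ → ℝ} (hr : ContDiff ℝ 2 r) (x : ℝ) :
    HasDerivAt r (deriv r x) x :=
  (hr.differentiable (by norm_num) x).hasDerivAt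

lemma hasDerivAt_deriv_r {r : ℝ → ℝ} (hr : ContDiff ℝ 2 r) (x : ℝ) :
    HasDerivAt (deriv r) (deriv (deriv r) x) x := by
  have h : ContDiff ℝ (1 + 1) r := by simpa [one_add_one_eq_two] using hr
  exact ((contDiff_succ_iff_deriv.1 h).2.2.differentiable (by norm_num) x).hasDerivAt

lemma r0sq_pos {r : ℝ → ℝ} {x t : ℝ} (h0 : 0 < r x - t * deriv r x) : 0 < r0sq r x t := by
  unfold r0sq; positivity

lemma r1sq_pos {r : ℝ → ℝ} {x t : ℝ} (h1 : 0 < r x + t * deriv r x) : 0 < r1sq r x t := by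
  unfold r1sq; positivity

lemma hasDerivAt_Psi_fst {r : ℝ → ℝ} (hr : ContDiff ℝ 2 r) {x t : ℝ}
    (h0 : 0 < r x - t * deriv r x) (h1 : 0 < r x + t * deriv r x) :
    HasDerivAt (fun y => Psi r (y, t))
      ((r x ^ 2 + t ^ 2 * chiF r x - 2 * t * r x * deriv r x) / r0sq r x t,
       (r x ^ 2 + t ^ 2 * chiF r x + 2 * t * r x * deriv r x) / r1sq r x t) x := by
  have d := hasDerivAt_r hr x
  have dd := hasDerivAt_deriv_r hr x
  have p0 := r0sq_pos h0
  have p1 := r1sq_pos h1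
  unfold Psi
  refine HasDerivAt.prodMk ?_ ?_
  · have := (hasDerivAt_id x).sub
      (((d.const_mul t).div (d.sub (dd.const_mul t)) h0.ne').arctan)
    refine this.congr_deriv ?_
    have e : 1 + (t * r x / (r x - t * deriv r x)) ^ 2
        = r0sq r x t / (r x - t * deriv r x) ^ 2 := by
      unfold r0sq; field_simp
    have h0' := h0.ne'
    simp only [Pi.sub_apply, Pi.div_apply] at *
    rw [e]
    field_simp
    unfold r0sq chiF
    ring
  · have := (hasDerivAt_id x).add
      (((d.const_mul t).div (d.add (dd.const_mul t)) h1.ne').arctan)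
    refine this.congr_deriv ?_
    have e : 1 + (t * r x / (r x + t * deriv r x)) ^ 2
        = r1sq r x t / (r x + t * deriv r x) ^ 2 := by
      unfold r1sq; field_simp
    have h1' := h1.ne'
    simp only [Pi.add_apply, Pi.div_apply] at *
    rw [e]
    field_simp
    unfold r1sq chiF
    ring

lemma hasDerivAt_Psi_snd {r : ℝ → ℝ} {x t : ℝ}
    (h0 : 0 < r x - t * deriv r x) (h1 : 0 < r x + t * deriv r x) :
    HasDerivAt (fun s => Psi r (x, s))
      (- r x ^ 2 / r0sq r x t, r x ^ 2 / r1sq r x t) t := by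
  have p0 := r0sq_pos h0
  have p1 := r1sq_pos h1
  have i := hasDerivAt_id t
  unfold Psi
  refine HasDerivAt.prodMk ?_ ?_
  · have := (hasDerivAt_const t x).sub
      (((i.mul_const (r x)).div ((hasDerivAt_const t (r x)).sub (i.mul_const (deriv r x)))
        h0.ne').arctan)
    refine this.congr_deriv ?_
    have e : 1 + (t * r x / (r x - t * deriv r x)) ^ 2
        = r0sq r x t / (r x - t * deriv r x) ^ 2 := by
      unfold r0sq; field_simp
    have h0' := h0.ne'
    simp only [Pi.sub_apply, Pi.div_apply, id] at *
    rw [e]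
    field_simp
    ring
  · have := (hasDerivAt_const t x).add
      (((i.mul_const (r x)).div ((hasDerivAt_const t (r x)).add (i.mul_const (deriv r x)))
        h1.ne').arctan)
    refine this.congr_deriv ?_
    have e : 1 + (t * r x / (r x + t * deriv r x)) ^ 2
        = r1sq r x t / (r x + t * deriv r x) ^ 2 := by
      unfold r1sq; field_simp
    have h1' := h1.ne'
    simp only [Pi.add_apply, Pi.div_apply, id] at *
    rw [e]
    field_simp
    ring

/-- If `F ∘ Ψ = G` near `(x, t)`, the chain rule along the two coordinate lines determines the
partial derivatives of `F` at `Ψ(x, t)` from those of `G` at `(x, t)` (denoted `g₁`, `g₂`),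
because the Jacobian of `Ψ` does not vanish. -/
lemma chain_Psi {r : ℝ → ℝ} (hr : ContDiff ℝ 2 r) {x t : ℝ} (hrx : 0 < r x)
    (hchi : 0 < chiF r x)
    (h0 : 0 < r x - t * deriv r x) (h1 : 0 < r x + t * deriv r x)
    {F G : ℝ × ℝ → ℝ} {L : ℝ × ℝ →L[ℝ] ℝ} (hF : HasFDerivAt F L (Psi r (x, t)))
    (hFG : ∀ᶠ q in nhds (x, t), F (Psi r q) = G q) {g₁ g₂ : ℝ}
    (hg₁ : HasDerivAt (fun y => G (y, t)) g₁ x) (hg₂ : HasDerivAt (fun s => G (x, s)) g₂ t) :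
    L (1, 0) = r0sq r x t * (g₁ * r x ^ 2
        - g₂ * (r x ^ 2 + t ^ 2 * chiF r x + 2 * t * r x * deriv r x))
        / (2 * r x ^ 2 * (chiF r x * t ^ 2 + r x ^ 2)) ∧
    L (0, 1) = r1sq r x t * (g₁ * r x ^ 2
        + g₂ * (r x ^ 2 + t ^ 2 * chiF r x - 2 * t * r x * deriv r x))
        / (2 * r x ^ 2 * (chiF r x * t ^ 2 + r x ^ 2)) := by
  have p0 := r0sq_pos h0
  have p1 := r1sq_pos h1
  have hL : ∀ a b : ℝ, L (a, b) = a * L (1, 0) + b * L (0, 1) := by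
    intro a b
    have : ((a, b) : ℝ × ℝ) = a • ((1, 0) : ℝ × ℝ) + b • ((0, 1) : ℝ × ℝ) := by
      ext <;> simp
    rw [this, map_add, map_smul, map_smul, smul_eq_mul, smul_eq_mul]
  have c₁ : Filter.Tendsto (fun y : ℝ => (y, t)) (nhds x) (nhds (x, t)) :=
    (by fun_prop : Continuous fun y : ℝ => (y, t)).tendsto x
  have c₂ : Filter.Tendsto (fun s : ℝ => (x, s)) (nhds t) (nhds (x, t)) :=
    (by fun_prop : Continuous fun s : ℝ => (x, s)).tendsto t
  have e₁ := (hF.comp_hasDerivAt x (hasDerivAt_Psi_fst hr h0 h1)).unique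
    (hg₁.congr_of_eventuallyEq (c₁.eventually hFG))
  have e₂ := (hF.comp_hasDerivAt t (hasDerivAt_Psi_snd h0 h1)).unique
    (hg₂.congr_of_eventuallyEq (c₂.eventually hFG))
  rw [hL] at e₁ e₂
  have hA : 0 < chiF r x * t ^ 2 + r x ^ 2 := by positivity
  rw [← e₁, ← e₂]
  generalize L (1, 0) = a
  generalize L (0, 1) = b
  constructor <;> · field_simp; ring

lemma continuous_deriv_r {r : ℝ → ℝ} (hr : ContDiff ℝ 2 r) : Continuous (deriv r) :=
  hr.continuous_deriv (by norm_num)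

lemma continuousAt_Psi {r : ℝ → ℝ} (hr : ContDiff ℝ 2 r) {x t : ℝ}
    (h0 : 0 < r x - t * deriv r x) (h1 : 0 < r x + t * deriv r x) :
    ContinuousAt (Psi r) (x, t) := by
  have c := hr.continuous
  have c' := continuous_deriv_r hr
  unfold Psi
  refine ContinuousAt.prodMk ?_ ?_
  · refine continuousAt_fst.sub (continuous_arctan.continuousAt.comp ?_)
    exact ContinuousAt.div (by fun_prop) (by fun_prop) h0.ne'
  · refine continuousAt_fst.add (continuous_arctan.continuousAt.comp ?_)
    exact ContinuousAt.div (by fun_prop) (by fun_prop) h1.ne'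

/-- The gradient of the generating function: `∂S/∂φ₀ = -r₀²/2` and `∂S/∂φ₁ = r₁²/2`. -/
lemma gradient_S {r : ℝ → ℝ} (hr : ContDiff ℝ 2 r) {x t : ℝ} (hrx : 0 < r x)
    (hchi : 0 < chiF r x)
    (h0 : 0 < r x - t * deriv r x) (h1 : 0 < r x + t * deriv r x)
    {S : ℝ × ℝ → ℝ} (hS : DifferentiableAt ℝ S (Psi r (x, t)))
    (hval : ∀ᶠ q : ℝ × ℝ in nhds (x, t), S (Psi r q) = q.2 * r q.1 ^ 2) :
    fderiv ℝ S (Psi r (x, t)) (1, 0) = - r0sq r x t / 2 ∧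
    fderiv ℝ S (Psi r (x, t)) (0, 1) = r1sq r x t / 2 := by
  have g₁ : HasDerivAt (fun y => t * r y ^ 2) (2 * t * r x * deriv r x) x :=
    (((hasDerivAt_r hr x).pow 2).const_mul t).congr_deriv (by norm_num; ring)
  have g₂ : HasDerivAt (fun s => s * r x ^ 2) (r x ^ 2) t := by
    simpa using (hasDerivAt_id t).mul_const (r x ^ 2)
  have hA : 0 < chiF r x * t ^ 2 + r x ^ 2 := by positivity
  obtain ⟨e₀, e₁⟩ := chain_Psi (G := fun q => q.2 * r q.1 ^ 2) hr hrx hchi h0 h1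
    hS.hasFDerivAt hval g₁ g₂
  rw [e₀, e₁]
  constructor <;> · field_simp; ring

lemma hasDerivAt_r0sq_fst {r : ℝ → ℝ} (hr : ContDiff ℝ 2 r) (x t : ℝ) :
    HasDerivAt (fun y => r0sq r y t)
      (2 * (r x - t * deriv r x) * (deriv r x - t * deriv (deriv r) x)
        + 2 * t ^ 2 * r x * deriv r x) x := by
  have d := hasDerivAt_r hr x
  have dd := hasDerivAt_deriv_r hr x
  exact (((d.sub (dd.const_mul t)).pow 2).add ((d.pow 2).const_mul (t ^ 2))).congr_deriv
    (by simp; ring)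

lemma hasDerivAt_r1sq_fst {r : ℝ → ℝ} (hr : ContDiff ℝ 2 r) (x t : ℝ) :
    HasDerivAt (fun y => r1sq r y t)
      (2 * (r x + t * deriv r x) * (deriv r x + t * deriv (deriv r) x)
        + 2 * t ^ 2 * r x * deriv r x) x := by
  have d := hasDerivAt_r hr x
  have dd := hasDerivAt_deriv_r hr x
  exact (((d.add (dd.const_mul t)).pow 2).add ((d.pow 2).const_mul (t ^ 2))).congr_deriv
    (by simp; ring)

lemma hasDerivAt_r0sq_snd (r : ℝ → ℝ) (x t : ℝ) :
    HasDerivAt (fun s => r0sq r x s)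
      (-2 * (r x - t * deriv r x) * deriv r x + 2 * t * r x ^ 2) t := by
  have i := hasDerivAt_id t
  exact ((((hasDerivAt_const t (r x)).sub (i.mul_const (deriv r x))).pow 2).add
    ((i.pow 2).mul_const (r x ^ 2))).congr_deriv (by simp)

lemma hasDerivAt_r1sq_snd (r : ℝ → ℝ) (x t : ℝ) :
    HasDerivAt (fun s => r1sq r x s)
      (2 * (r x + t * deriv r x) * deriv r x + 2 * t * r x ^ 2) t := by
  have i := hasDerivAt_id t
  exact ((((hasDerivAt_const t (r x)).add (i.mul_const (deriv r x))).pow 2).add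
    ((i.pow 2).mul_const (r x ^ 2))).congr_deriv (by simp)

/-- On an open set where `S` is `C²`, each iterated partial derivative `∂²S/∂φᵢ²` in the sense of
`deriv` is the partial derivative of the corresponding component of `fderiv ℝ S`. -/
lemma deriv_deriv_eq {S : ℝ × ℝ → ℝ} {U : Set (ℝ × ℝ)} (hU : IsOpen U) {p : ℝ × ℝ}
    (hp : p ∈ U) (hS : ContDiffOn ℝ 2 S U) :
    deriv (fun a => deriv (fun a' => S (a', p.2)) a) p.1
      = fderiv ℝ (fun q => fderiv ℝ S q (1, 0)) p (1, 0) ∧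
    deriv (fun b => deriv (fun b' => S (p.1, b')) b) p.2
      = fderiv ℝ (fun q => fderiv ℝ S q (0, 1)) p (0, 1) := by
  have hdS : ∀ q ∈ U, DifferentiableAt ℝ S q := fun q hq =>
    (hS.differentiableOn (by norm_num)).differentiableAt (hU.mem_nhds hq)
  have hd : DifferentiableAt ℝ (fderiv ℝ S) p :=
    ((hS.fderiv_of_isOpen (m := 1) hU (by norm_num)).differentiableOn
      (by norm_num)).differentiableAt (hU.mem_nhds hp)
  have hdv : ∀ v, DifferentiableAt ℝ (fun q => fderiv ℝ S q v) p := fun v =>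
    hd.clm_apply (differentiableAt_const v)
  have l₁ : ∀ a b : ℝ, HasDerivAt (fun a' => (a', b)) ((1, 0) : ℝ × ℝ) a := fun a b =>
    (hasDerivAt_id a).prodMk (hasDerivAt_const a b)
  have l₂ : ∀ a b : ℝ, HasDerivAt (fun b' => (a, b')) ((0, 1) : ℝ × ℝ) b := fun a b =>
    (hasDerivAt_const b a).prodMk (hasDerivAt_id b)
  have n₁ : ∀ᶠ a in nhds p.1, (a, p.2) ∈ U :=
    (l₁ p.1 p.2).continuousAt.eventually (hU.mem_nhds hp)
  have n₂ : ∀ᶠ b in nhds p.2, (p.1, b) ∈ U :=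
    (l₂ p.1 p.2).continuousAt.eventually (hU.mem_nhds hp)
  constructor
  · have h : (fun a => deriv (fun a' => S (a', p.2)) a)
        =ᶠ[nhds p.1] fun a => fderiv ℝ S (a, p.2) (1, 0) := by
      filter_upwards [n₁] with a ha
      exact ((hdS _ ha).hasFDerivAt.comp_hasDerivAt a (l₁ a p.2)).deriv
    rw [h.deriv_eq]
    exact (HasFDerivAt.comp_hasDerivAt p.1 (hdv (1, 0)).hasFDerivAt (l₁ p.1 p.2)).deriv
  · have h : (fun b => deriv (fun b' => S (p.1, b')) b)
        =ᶠ[nhds p.2] fun b => fderiv ℝ S (p.1, b) (0, 1) := by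
      filter_upwards [n₂] with b hb
      exact ((hdS _ hb).hasFDerivAt.comp_hasDerivAt b (l₂ p.1 b)).deriv
    rw [h.deriv_eq]
    exact (HasFDerivAt.comp_hasDerivAt p.2 (hdv (0, 1)).hasFDerivAt (l₂ p.1 p.2)).deriv

/-- The pure second partial derivatives of the generating function `S`
at `Ψ(φ,t)`. -/
theorem generating_function_pure_second_derivatives
    (r : ℝ → ℝ) (hr : ContDiff ℝ 2 r) (hper : ∀ φ, r (φ + 2 * π) = r φ)
    (hpos : ∀ φ, 0 < r φ) (hchi : ∀ φ, 0 < chiF r φ)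
    (φ t : ℝ) (ht : 0 < t)
    (h0 : 0 < r φ - t * deriv r φ) (h1 : 0 < r φ + t * deriv r φ)
    (S : ℝ × ℝ → ℝ) (U : Set (ℝ × ℝ)) (hU : IsOpen U) (hmem : Psi r (φ, t) ∈ U)
    (hS : ContDiffOn ℝ 2 S U)
    (hval : ∀ᶠ q : ℝ × ℝ in nhds (φ, t), S (Psi r q) = q.2 * r q.1 ^ 2) :
    deriv (fun a => deriv (fun a' => S (a', (Psi r (φ, t)).2)) a) ((Psi r (φ, t)).1)
        = r0sq r φ t * (chiF r φ * t * (t ^ 2 - 1) * r φ ^ 2 + 2 * t * r φ ^ 4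
              - 2 * r φ ^ 3 * deriv r φ
              + t * (chiF r φ * t ^ 2 + 2 * r φ ^ 2) * (deriv r φ) ^ 2)
            / (2 * r φ ^ 2 * (chiF r φ * t ^ 2 + r φ ^ 2)) ∧
    deriv (fun b => deriv (fun b' => S ((Psi r (φ, t)).1, b')) b) ((Psi r (φ, t)).2)
        = r1sq r φ t * (chiF r φ * t * (t ^ 2 - 1) * r φ ^ 2 + 2 * t * r φ ^ 4
              + 2 * r φ ^ 3 * deriv r φ
              + t * (chiF r φ * t ^ 2 + 2 * r φ ^ 2) * (deriv r φ) ^ 2)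
            / (2 * r φ ^ 2 * (chiF r φ * t ^ 2 + r φ ^ 2)) := by
  have hdS : ∀ q ∈ U, DifferentiableAt ℝ S q := fun q hq =>
    (hS.differentiableOn (by norm_num)).differentiableAt (hU.mem_nhds hq)
  have hd : DifferentiableAt ℝ (fderiv ℝ S) (Psi r (φ, t)) :=
    ((hS.fderiv_of_isOpen (m := 1) hU (by norm_num)).differentiableOn
      (by norm_num)).differentiableAt (hU.mem_nhds hmem)
  have hdv : ∀ v, DifferentiableAt ℝ (fun q => fderiv ℝ S q v) (Psi r (φ, t)) := fun v =>
    hd.clm_apply (differentiableAt_const v)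
  have c := hr.continuous
  have c' := continuous_deriv_r hr
  -- The gradient formula holds on a neighbourhood, so it can be differentiated once more.
  have hgrad : ∀ᶠ q : ℝ × ℝ in nhds (φ, t),
      fderiv ℝ S (Psi r q) (1, 0) = - r0sq r q.1 q.2 / 2 ∧
      fderiv ℝ S (Psi r q) (0, 1) = r1sq r q.1 q.2 / 2 := by
    have n0 : ∀ᶠ q : ℝ × ℝ in nhds (φ, t), 0 < r q.1 - q.2 * deriv r q.1 :=
      (by fun_prop : Continuous fun q : ℝ × ℝ => r q.1 - q.2 * deriv r q.1).continuousAt.eventually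
        (lt_mem_nhds h0)
    have n1 : ∀ᶠ q : ℝ × ℝ in nhds (φ, t), 0 < r q.1 + q.2 * deriv r q.1 :=
      (by fun_prop : Continuous fun q : ℝ × ℝ => r q.1 + q.2 * deriv r q.1).continuousAt.eventually
        (lt_mem_nhds h1)
    filter_upwards [n0, n1, (continuousAt_Psi hr h0 h1).eventually (hU.mem_nhds hmem),
      hval.eventually_nhds] with q hq0 hq1 hqU hq
    exact gradient_S hr (hpos _) (hchi _) hq0 hq1 (hdS _ hqU) hq
  have hA : 0 < chiF r φ * t ^ 2 + r φ ^ 2 := by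
    have := hchi φ
    have := hpos φ
    positivity
  have hr0 := hpos φ
  obtain ⟨d₀, d₁⟩ := deriv_deriv_eq hU hmem hS
  rw [d₀, d₁]
  constructor
  · rw [(chain_Psi (G := fun q => - r0sq r q.1 q.2 / 2) hr (hpos φ) (hchi φ) h0 h1
      (hdv (1, 0)).hasFDerivAt (hgrad.mono fun q hq => hq.1)
      ((hasDerivAt_r0sq_fst hr φ t).neg.div_const 2)
      ((hasDerivAt_r0sq_snd r φ t).neg.div_const 2)).1]
    congr 2
    unfold chiF
    ring
  · rw [(chain_Psi (G := fun q => r1sq r q.1 q.2 / 2) hr (hpos φ) (hchi φ) h0 h1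
      (hdv (0, 1)).hasFDerivAt (hgrad.mono fun q hq => hq.2)
      ((hasDerivAt_r1sq_fst hr φ t).div_const 2)
      ((hasDerivAt_r1sq_snd r φ t).div_const 2)).2]
    congr 2
    unfold chiF
    ring
end
end
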